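/- arXiv:2203.11190 — 13 statements merged into one kernel-verified Lean document; each statement's English description precedes it below -/
import Mathlib

section
/- Let q and p be probability distributions on [n] = {1,…,n} with q(i) = 0 whenever p(i) = 0, let C ≥ 1, λ ≥ 1, and S ⊆ [n]. Suppose p(i) ≤ C/n for all i ∈ [n] and p(i) ≥ 1/(Cn) for all i ∈ S. Then ∑_{i∈S} q(i)·(q(i)/p(i))^{λ−1} ≤ C^{λ−1}·(1 + n^{λ−1}·λ(λ−1)·(DKL(q‖p) + log C)). In particular, when S = [n] the quantity D_λ(q‖p) := ∑_{i∈[n]} q(i)^λ p(i)^{1−λ} is bounded by C^{λ−1}·(1 + n^{λ−1}·λ(λ−1)·(DKL(q‖p) + log C)). -/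
open Finset

/-- The derivative of the difference between the scaled second-order remainder of `x * log x`
at `1` and that of `x ^ l`. -/
private lemma hasDerivAt_remainder_gap (l M : ℝ) {x : ℝ} (hx : 0 < x) :
    HasDerivAt (fun x : ℝ => l * (l - 1) * M * (x * Real.log x - x + 1) -
      (x ^ l - 1 - l * (x - 1)))
      (l * ((l - 1) * M * Real.log x - (x ^ (l - 1) - 1))) x := by
  have h1 := Real.hasDerivAt_mul_log hx.ne'
  have h2 := Real.hasDerivAt_rpow_const (x := x) (p := l) (Or.inl hx.ne')
  have h3 := hasDerivAt_id' x
  refine ((((h1.sub h3).add_const 1).const_mul (l * (l - 1) * M)).sub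
    ((h2.sub_const 1).sub ((h3.sub_const 1).const_mul l))).congr_deriv ?_
  ring

/-- On `[0, N]` the second-order remainder of `x ^ l` at `1` is at most `l * (l - 1) * N ^ (l - 1)`
times that of `x * log x`. -/
lemma rpow_le_add_mul_log_remainder {l N x : ℝ} (hl : 1 ≤ l) (hN : 1 ≤ N) (hx0 : 0 ≤ x)
    (hxN : x ≤ N) :
    x ^ l ≤ 1 + l * (x - 1) + l * (l - 1) * N ^ (l - 1) * (x * Real.log x - x + 1) := by
  have hM : 1 ≤ N ^ (l - 1) := Real.one_le_rpow hN (by linarith)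
  set h : ℝ → ℝ := fun x => l * (l - 1) * N ^ (l - 1) * (x * Real.log x - x + 1) -
    (x ^ l - 1 - l * (x - 1)) with hh
  have h_one : h 1 = 0 := by simp [hh]
  have hcont : Continuous h := by
    have := Real.continuous_mul_log
    have := Real.continuous_rpow_const (q := l) (by linarith)
    fun_prop
  have hderiv : ∀ y, 0 < y →
      deriv h y = l * ((l - 1) * N ^ (l - 1) * Real.log y - (y ^ (l - 1) - 1)) :=
    fun y hy => (hasDerivAt_remainder_gap l _ hy).deriv
  have hdiff : ∀ y, 0 < y → DifferentiableAt ℝ h y :=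
    fun y hy => (hasDerivAt_remainder_gap l _ hy).differentiableAt
  suffices 0 ≤ h x by simp only [hh] at this; linarith
  rcases le_total x 1 with hx1 | hx1
  · have hanti : AntitoneOn h (Set.Icc 0 1) := by
      refine antitoneOn_of_deriv_nonpos (convex_Icc 0 1) hcont.continuousOn ?_ ?_
      · rw [interior_Icc]
        exact fun y hy => (hdiff y hy.1).differentiableWithinAt
      · rw [interior_Icc]
        intro y hy
        rw [hderiv y hy.1]
        have hlog : (l - 1) * Real.log y ≤ 0 :=
          mul_nonpos_of_nonneg_of_nonpos (by linarith) (Real.log_nonpos hy.1.le hy.2.le)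
        have h2 := Real.log_le_sub_one_of_pos (Real.rpow_pos_of_pos hy.1 (l - 1))
        rw [Real.log_rpow hy.1] at h2
        refine mul_nonpos_of_nonneg_of_nonpos (by linarith) ?_
        nlinarith
    rw [← h_one]
    exact hanti ⟨hx0, hx1⟩ ⟨zero_le_one, le_rfl⟩ hx1
  · have hmono : MonotoneOn h (Set.Icc 1 N) := by
      refine monotoneOn_of_deriv_nonneg (convex_Icc 1 N) hcont.continuousOn ?_ ?_
      · rw [interior_Icc]
        exact fun y hy => (hdiff y (by linarith [hy.1])).differentiableWithinAt
      · rw [interior_Icc]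
        intro y hy
        have hy0 : 0 < y := by linarith [hy.1]
        rw [hderiv y hy0]
        have hlog : 0 ≤ (l - 1) * Real.log y :=
          mul_nonneg (by linarith) (Real.log_nonneg hy.1.le)
        have hpos := Real.rpow_pos_of_pos hy0 (l - 1)
        have h2 := Real.one_sub_inv_le_log_of_pos hpos
        rw [Real.log_rpow hy0] at h2
        have hle : y ^ (l - 1) ≤ N ^ (l - 1) :=
          Real.rpow_le_rpow hy0.le hy.2.le (by linarith)
        have h3 := mul_le_mul_of_nonneg_left h2 hpos.le
        rw [mul_sub, mul_inv_cancel₀ hpos.ne'] at h3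
        refine mul_nonneg (by linarith) ?_
        nlinarith [mul_le_mul_of_nonneg_right hle hlog]
    rw [← h_one]
    exact hmono ⟨le_rfl, hN⟩ ⟨hx1, hxN⟩ hx1

/-- The order-`l` Renyi sum of `q` against the uniform distribution is controlled by the KL
divergence of `q` from the uniform distribution. -/
lemma sum_mul_rpow_le_of_uniform {n : ℕ} (hn : 0 < n) {q : Fin n → ℝ} (hq0 : ∀ i, 0 ≤ q i)
    (hqsum : ∑ i, q i = 1) {l : ℝ} (hl : 1 ≤ l) :
    ∑ i, q i * (n * q i) ^ (l - 1) ≤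
      1 + (n : ℝ) ^ (l - 1) * (l * (l - 1)) * ∑ i, q i * Real.log (n * q i) := by
  have hn0 : (0 : ℝ) < n := by exact_mod_cast hn
  have hn1 : (1 : ℝ) ≤ n := by exact_mod_cast hn
  have hq1 : ∀ i, q i ≤ 1 := fun i =>
    hqsum ▸ Finset.single_le_sum (fun j _ => hq0 j) (Finset.mem_univ i)
  have hpt : ∀ i, n * (q i * (n * q i) ^ (l - 1)) ≤ 1 + l * (n * q i - 1) +
      l * (l - 1) * (n : ℝ) ^ (l - 1) * (n * (q i * Real.log (n * q i)) - n * q i + 1) := by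
    intro i
    have hx0 : 0 ≤ n * q i := mul_nonneg hn0.le (hq0 i)
    have h := rpow_le_add_mul_log_remainder hl hn1 hx0 (by nlinarith [hq1 i])
    have hpow : (n * q i) ^ l = n * (q i * (n * q i) ^ (l - 1)) := by
      rw [← mul_assoc, ← Real.rpow_one_add' hx0 (by linarith)]
      congr 1
      ring
    rw [hpow] at h
    linarith
  have hsum := Finset.sum_le_sum fun i (_ : i ∈ Finset.univ) => hpt i
  simp only [Finset.sum_add_distrib, Finset.sum_sub_distrib, ← Finset.mul_sum, hqsum,
    Finset.sum_const, Finset.card_univ, Fintype.card_fin, nsmul_eq_mul] at hsum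
  refine le_of_mul_le_mul_left ?_ hn0
  linarith

/-- If `p ≤ C / n` pointwise, the KL divergence from the uniform distribution exceeds that
from `p` by at most `log C`. -/
lemma sum_mul_log_uniform_le {n : ℕ} (hn : 0 < n) {q p : Fin n → ℝ} (hq0 : ∀ i, 0 ≤ q i)
    (hp0 : ∀ i, 0 ≤ p i) (hqsum : ∑ i, q i = 1) (hac : ∀ i, p i = 0 → q i = 0)
    {C : ℝ} (hC : 0 < C) (hub : ∀ i, p i ≤ C / n) :
    ∑ i, q i * Real.log (n * q i) ≤ (∑ i, q i * Real.log (q i / p i)) + Real.log C := by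
  have hn0 : (0 : ℝ) < n := by exact_mod_cast hn
  have hlogC : Real.log C = ∑ i, q i * Real.log C := by rw [← Finset.sum_mul, hqsum, one_mul]
  rw [hlogC, ← Finset.sum_add_distrib]
  refine Finset.sum_le_sum fun i _ => ?_
  rcases (hq0 i).eq_or_lt with hq | hq
  · simp [← hq]
  have hp : 0 < p i := (hp0 i).lt_of_ne fun h => hq.ne' (hac i h.symm)
  rw [← mul_add, ← Real.log_mul (by positivity) hC.ne']
  refine mul_le_mul_of_nonneg_left (Real.log_le_log (by positivity) ?_) hq.le
  have hpn : p i * n ≤ C := (le_div_iff₀ hn0).mp (hub i)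
  rw [div_mul_eq_mul_div, le_div_iff₀ hp]
  nlinarith

/-- Comparison between exponentiated Renyi divergences and the KL
divergence for distributions `q, p` on `[n]` with `p` nearly uniform. -/
theorem renyi_kl_comparison (n : ℕ) (hn : 0 < n) (q p : Fin n → ℝ)
    (hq0 : ∀ i, 0 ≤ q i) (hp0 : ∀ i, 0 ≤ p i)
    (hqsum : ∑ i, q i = 1) (hpsum : ∑ i, p i = 1)
    (hac : ∀ i, p i = 0 → q i = 0)
    (C lam : ℝ) (hC : 1 ≤ C) (hlam : 1 ≤ lam)
    (S : Finset (Fin n))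
    (hub : ∀ i, p i ≤ C / n)
    (hlb : ∀ i ∈ S, 1 / (C * n) ≤ p i) :
    (∑ i ∈ S, q i * (q i / p i) ^ (lam - 1) ≤
      C ^ (lam - 1) * (1 + (n : ℝ) ^ (lam - 1) * (lam * (lam - 1)) *
        ((∑ i, q i * Real.log (q i / p i)) + Real.log C))) ∧
    (S = Finset.univ →
      ∑ i, q i ^ lam * p i ^ (1 - lam) ≤
        C ^ (lam - 1) * (1 + (n : ℝ) ^ (lam - 1) * (lam * (lam - 1)) *
          ((∑ i, q i * Real.log (q i / p i)) + Real.log C))) := by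
  have hn0 : (0 : ℝ) < n := by exact_mod_cast hn
  have hC0 : 0 < C := by linarith
  have hppos : ∀ i ∈ S, 0 < p i := fun i hi => lt_of_lt_of_le (by positivity) (hlb i hi)
  have hmain : ∑ i ∈ S, q i * (q i / p i) ^ (lam - 1) ≤
      C ^ (lam - 1) * (1 + (n : ℝ) ^ (lam - 1) * (lam * (lam - 1)) *
        ((∑ i, q i * Real.log (q i / p i)) + Real.log C)) := by
    calc ∑ i ∈ S, q i * (q i / p i) ^ (lam - 1)
        ≤ ∑ i ∈ S, C ^ (lam - 1) * (q i * (n * q i) ^ (lam - 1)) := by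
          refine Finset.sum_le_sum fun i hi => ?_
          have hratio : q i / p i ≤ C * (n * q i) := by
            rw [div_le_iff₀ (hppos i hi)]
            have h := (div_le_iff₀ (by positivity)).mp (hlb i hi)
            nlinarith [hq0 i]
          have hnq : 0 ≤ n * q i := mul_nonneg hn0.le (hq0 i)
          rw [mul_left_comm, ← Real.mul_rpow hC0.le hnq]
          exact mul_le_mul_of_nonneg_left (Real.rpow_le_rpow
            (div_nonneg (hq0 i) (hp0 i)) hratio (by linarith)) (hq0 i)
      _ ≤ ∑ i, C ^ (lam - 1) * (q i * (n * q i) ^ (lam - 1)) :=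
          Finset.sum_le_sum_of_subset_of_nonneg (Finset.subset_univ S) fun i _ _ => by
            have := hq0 i
            positivity
      _ = C ^ (lam - 1) * ∑ i, q i * (n * q i) ^ (lam - 1) := (Finset.mul_sum ..).symm
      _ ≤ _ := by
          refine mul_le_mul_of_nonneg_left
            ((sum_mul_rpow_le_of_uniform hn hq0 hqsum hlam).trans ?_) (by positivity)
          have hcoef : 0 ≤ (n : ℝ) ^ (lam - 1) * (lam * (lam - 1)) :=
            mul_nonneg (by positivity) (mul_nonneg (by linarith) (by linarith))
          gcongr
          exact sum_mul_log_uniform_le hn hq0 hp0 hqsum hac hC0 hub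
  refine ⟨hmain, ?_⟩
  rintro rfl
  refine le_of_eq_of_le (Finset.sum_congr rfl fun i hi => ?_) hmain
  rw [Real.div_rpow (hq0 i) (hp0 i), div_eq_mul_inv, ← Real.rpow_neg (hp0 i), ← mul_assoc,
    ← Real.rpow_one_add' (hq0 i) (by linarith)]
  ring_nf
end

section
/- Let μ be a probability distribution on binom([n],k) that is negatively correlated, meaning P_{S∼μ}[T ⊆ S] ≤ ∏_{i∈T} p_i for every T ⊆ [n], where p_i = P_{S∼μ}[i ∈ S]. Then for every integer t with 2t ≤ k and every T ∈ binom([n],t), μ_t(T) ≤ exp(t²/k) · t! · ∏_{i∈T} (p_i/k), where μ_t = μD_{k→t}. -/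
open Finset

/-- The falling factorial loses at most a factor `exp (t² / k)` against the power `k ^ t`,
as long as `2 * t ≤ k`. -/
theorem pow_le_exp_sq_div_mul_descFactorial (k : ℕ) (hk : 0 < k) (t : ℕ) (ht : 2 * t ≤ k) :
    (k : ℝ) ^ t ≤ Real.exp ((t : ℝ) ^ 2 / k) * (k.descFactorial t : ℝ) := by
  have hk' : (0 : ℝ) < k := by exact_mod_cast hk
  induction t with
  | zero => simp
  | succ t ih =>
    have ih := ih (by omega)
    have htk : 2 * (t : ℝ) ≤ k := by exact_mod_cast (by omega : 2 * t ≤ k)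
    have ht0 : (0 : ℝ) ≤ t := t.cast_nonneg
    have hstep : (k : ℝ) ≤ Real.exp ((2 * t + 1) / k) * (k - t) := by
      have hlin : 1 + 2 * t / k ≤ Real.exp ((2 * t + 1) / k) := by
        have h := Real.add_one_le_exp ((2 * (t : ℝ) + 1) / k)
        have : 2 * (t : ℝ) / k ≤ (2 * t + 1) / k := by gcongr; linarith
        linarith
      calc (k : ℝ) ≤ (1 + 2 * t / k) * (k - t) := by
            have h : (1 + 2 * t / k) * ((k : ℝ) - t) = k + t * (k - 2 * t) / k := by
              field_simp
              ring
            have : 0 ≤ t * ((k : ℝ) - 2 * t) / k := by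
              have := sub_nonneg.2 htk
              positivity
            linarith
        _ ≤ _ := mul_le_mul_of_nonneg_right hlin (by linarith)
    have hexp : Real.exp (((t + 1 : ℕ) : ℝ) ^ 2 / k) =
        Real.exp ((t : ℝ) ^ 2 / k) * Real.exp ((2 * t + 1) / k) := by
      rw [← Real.exp_add]
      congr 1
      push_cast
      ring
    rw [hexp, Nat.descFactorial_succ, Nat.cast_mul, Nat.cast_sub (by omega), pow_succ]
    calc (k : ℝ) ^ t * k
        ≤ (Real.exp ((t : ℝ) ^ 2 / k) * (k.descFactorial t : ℝ)) *
          (Real.exp ((2 * t + 1) / k) * (k - t)) := by gcongr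
      _ = _ := by ring

/-- For a negatively correlated distribution `μ` on `k`-subsets of `[n]`,
the downed measure `μ_t = μ D_{k→t}` satisfies
`μ_t(T) ≤ exp(t²/k) · t! · ∏_{i∈T} (p_i/k)`. -/
theorem negatively_correlated_down_operator_bound (n k : ℕ) (hk : 0 < k)
    (μ : Finset (Fin n) → ℝ)
    (hnn : ∀ S, 0 ≤ μ S) (hsupp : ∀ S, μ S ≠ 0 → S.card = k)
    (hsum : ∑ S, μ S = 1)
    (p : Fin n → ℝ)
    (hp : ∀ i, p i = ∑ S ∈ univ.filter (fun S : Finset (Fin n) => i ∈ S), μ S)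
    (hnegcor : ∀ T : Finset (Fin n),
      ∑ S ∈ univ.filter (fun S : Finset (Fin n) => T ⊆ S), μ S ≤ ∏ i ∈ T, p i)
    (t : ℕ) (ht : 2 * t ≤ k) (T : Finset (Fin n)) (hT : T.card = t) :
    ((k.choose t : ℝ))⁻¹ * ∑ S ∈ univ.filter (fun S : Finset (Fin n) => T ⊆ S), μ S ≤
      Real.exp ((t : ℝ) ^ 2 / k) * (t.factorial : ℝ) * ∏ i ∈ T, p i / k := by
  have hk' : (0 : ℝ) < k := by exact_mod_cast hk
  have hchoose : (0 : ℝ) < k.choose t := by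
    exact_mod_cast Nat.choose_pos (by omega : t ≤ k)
  have hprod : 0 ≤ ∏ i ∈ T, p i :=
    (sum_nonneg fun S _ => hnn S).trans (hnegcor T)
  have hpow := pow_le_exp_sq_div_mul_descFactorial k hk t ht
  rw [Nat.descFactorial_eq_factorial_mul_choose, Nat.cast_mul] at hpow
  rw [prod_div_distrib, prod_const, hT, inv_mul_le_iff₀ hchoose]
  refine (hnegcor T).trans ?_
  calc ∏ i ∈ T, p i = (k : ℝ) ^ t * ((∏ i ∈ T, p i) / (k : ℝ) ^ t) := by field_simp
    _ ≤ Real.exp ((t : ℝ) ^ 2 / k) * (t.factorial * k.choose t) *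
        ((∏ i ∈ T, p i) / (k : ℝ) ^ t) := by gcongr
    _ = _ := by ring
end

section
/- Let k₀ = k be a nonnegative integer and define recursively k_{i+1} = k_i − ⌈√(k_i)⌉ for all i ≥ 0. Then √(k_{i+1}) ≤ √(k_i) − 1/2 whenever k_i ≥ 1, and consequently k_t = 0 for every integer t ≥ 2√k. -/
/-- Removing `⌈√n⌉` from a positive integer `n` decreases its square root by at least `1/2`. -/
theorem sqrt_sub_ceil_sqrt_le {n : ℕ} (hn : 1 ≤ n) :
    Real.sqrt ((n - ⌈Real.sqrt n⌉₊ : ℕ) : ℝ) ≤ Real.sqrt n - 1 / 2 := by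
  have hn' : (1 : ℝ) ≤ n := by exact_mod_cast hn
  have hs : 1 ≤ Real.sqrt n := Real.one_le_sqrt.mpr hn'
  have hsq : Real.sqrt n * Real.sqrt n = n := Real.mul_self_sqrt (by positivity)
  have hceil : ⌈Real.sqrt n⌉₊ ≤ n := Nat.ceil_le.mpr (by nlinarith)
  refine Real.sqrt_le_iff.mpr ⟨by linarith, ?_⟩
  rw [Nat.cast_sub hceil]
  nlinarith [Nat.le_ceil (Real.sqrt n)]

/-- For the recursion `k₀ = k`, `k_{i+1} = k_i − ⌈√k_i⌉`:
`√(k_{i+1}) ≤ √(k_i) − 1/2` whenever `k_i ≥ 1`, and `k_t = 0` for every `t ≥ 2√k`. -/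
theorem batched_sampling_iteration_count (k : ℕ) (ks : ℕ → ℕ) (h0 : ks 0 = k)
    (hrec : ∀ i, ks (i + 1) = ks i - ⌈Real.sqrt (ks i)⌉₊) :
    (∀ i, 1 ≤ ks i → Real.sqrt (ks (i + 1)) ≤ Real.sqrt (ks i) - 1 / 2) ∧
    (∀ t : ℕ, 2 * Real.sqrt k ≤ (t : ℝ) → ks t = 0) := by
  have hstep : ∀ i, 1 ≤ ks i → Real.sqrt (ks (i + 1)) ≤ Real.sqrt (ks i) - 1 / 2 := by
    intro i hi
    rw [hrec i]
    exact sqrt_sub_ceil_sqrt_le hi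
  refine ⟨hstep, fun t ht => ?_⟩
  have hbound : ∀ t : ℕ, 1 ≤ ks t → Real.sqrt (ks t) ≤ Real.sqrt k - t / 2 := by
    intro t
    induction t with
    | zero => simp [h0]
    | succ t ih =>
      intro hpos
      have hprev : 1 ≤ ks t := by
        have := hrec t
        omega
      have := ih hprev
      have := hstep t hprev
      push_cast
      linarith
  by_contra hne
  have hpos : 1 ≤ ks t := Nat.one_le_iff_ne_zero.mpr hne
  have hs : 1 ≤ Real.sqrt (ks t) := Real.one_le_sqrt.mpr (by exact_mod_cast hpos)
  linarith [hbound t hpos]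
end

section
/- Let n and k be positive integers, β ∈ (0,1), and let p₁,…,p_n ∈ [0,1] satisfy ∑_{i=1}^n p_i = k. Set t_i = ⌈(n/(βk))·p_i⌉ and |U| = ∑_{i=1}^n t_i. Then for every i with t_i ≥ 1, p_i/t_i ≤ βk/n, and moreover βk/n ≤ (1+√β)·k/|U|; hence p_i/t_i ≤ (1+√β)·k/|U| for every i with t_i ≥ 1. -/
open Finset

/-- Marginal upper bound for the isotropic transformation:
with `t_i = ⌈(n/(βk))·p_i⌉` and `|U| = ∑ t_i`, for every `i` with `t_i ≥ 1` we have
`p_i/t_i ≤ βk/n`, moreover `βk/n ≤ (1+√β)·k/|U|`, hence `p_i/t_i ≤ (1+√β)·k/|U|`. -/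
theorem isotropic_transformation_marginal_upper_bound (n k : ℕ) (hn : 0 < n) (hk : 0 < k)
    (β : ℝ) (hβ : β ∈ Set.Ioo (0 : ℝ) 1)
    (p : Fin n → ℝ) (hp : ∀ i, p i ∈ Set.Icc (0 : ℝ) 1) (hsum : ∑ i, p i = k)
    (t : Fin n → ℕ) (ht : ∀ i, t i = ⌈((n : ℝ) / (β * k)) * p i⌉₊)
    (Ucard : ℕ) (hU : Ucard = ∑ i, t i) :
    (∀ i, 1 ≤ t i → p i / (t i : ℝ) ≤ β * k / n) ∧
    (β * k / n ≤ (1 + Real.sqrt β) * k / (Ucard : ℝ)) ∧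
    (∀ i, 1 ≤ t i → p i / (t i : ℝ) ≤ (1 + Real.sqrt β) * k / (Ucard : ℝ)) := by
  obtain ⟨hβ0, hβ1⟩ := hβ
  have hn' : (0 : ℝ) < n := by exact_mod_cast hn
  have hk' : (0 : ℝ) < k := by exact_mod_cast hk
  have hscaled : ∑ i, (n : ℝ) / (β * k) * p i = n / β := by
    rw [← Finset.mul_sum, hsum]
    field_simp
  have hUcast : (Ucard : ℝ) = ∑ i, (t i : ℝ) := by
    rw [hU]
    push_cast
    rfl
  have hle : ∀ i, (n : ℝ) / (β * k) * p i ≤ t i := fun i => by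
    rw [ht i]
    exact Nat.le_ceil _
  have hlt : ∀ i, (t i : ℝ) ≤ (n : ℝ) / (β * k) * p i + 1 := fun i => by
    rw [ht i]
    exact (Nat.ceil_lt_add_one (mul_nonneg (by positivity) (hp i).1)).le
  have hU_pos : (0 : ℝ) < Ucard := by
    have : (n : ℝ) / β ≤ Ucard := by
      rw [hUcast, ← hscaled]
      exact Finset.sum_le_sum fun i _ => hle i
    exact lt_of_lt_of_le (by positivity) this
  have hU_le : (Ucard : ℝ) ≤ n / β + n := by
    calc (Ucard : ℝ) ≤ ∑ i, ((n : ℝ) / (β * k) * p i + 1) := by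
          rw [hUcast]
          exact Finset.sum_le_sum fun i _ => hlt i
      _ = n / β + n := by
          rw [Finset.sum_add_distrib, hscaled]
          simp
  have hβ_sqrt : β ≤ Real.sqrt β := Real.le_sqrt_of_sq_le (by nlinarith)
  have hmarginal : ∀ i, 1 ≤ t i → p i / (t i : ℝ) ≤ β * k / n := fun i hi => by
    have hti : (0 : ℝ) < t i := by exact_mod_cast hi
    have h := hle i
    rw [div_mul_eq_mul_div, div_le_iff₀ (by positivity)] at h
    rw [div_le_div_iff₀ hti hn']
    linarith
  have hbound : β * k / n ≤ (1 + Real.sqrt β) * k / (Ucard : ℝ) := by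
    have hβU : β * Ucard ≤ (1 + Real.sqrt β) * n := by
      calc β * Ucard ≤ β * (n / β + n) := by gcongr
        _ = (1 + β) * n := by field_simp
        _ ≤ (1 + Real.sqrt β) * n := by gcongr
    rw [div_le_div_iff₀ hn' hU_pos]
    calc β * k * Ucard = β * Ucard * k := by ring
      _ ≤ (1 + Real.sqrt β) * n * k := by gcongr
      _ = (1 + Real.sqrt β) * k * n := by ring
  exact ⟨hmarginal, hbound, fun i hi => (hmarginal i hi).trans hbound⟩
end

section
/- Let n, k, ℓ be positive integers with ℓ ≤ k ≤ n, β ∈ (0,1), and let μ be a probability distribution on binom([n],k) with marginals p_i = P_{S∼μ}[i∈S]. Set t_i = ⌈(n/(βk))·p_i⌉ and |U| = ∑_{i=1}^n t_i. Then: (a) for every i with p_i ≥ √β·k/n one has p_i/t_i ≥ k/((1+√β)·|U|); and (b) letting R̄ = {i ∈ [n] : p_i ≥ √β·k/n}, the downed distribution μ_ℓ = μD_{k→ℓ} satisfies ∑_{T ∈ binom(R̄,ℓ)} μ_ℓ(T) ≥ 1 − √β·ℓ. -/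
open Finset

/-- At most `m * (a + m - 1).choose r` of the `(r + 1)`-subsets of an `(a + m)`-set meet a fixed
`m`-subset. -/
theorem choose_add_succ_le (a m r : ℕ) :
    (a + m).choose (r + 1) ≤ a.choose (r + 1) + m * (a + m - 1).choose r := by
  induction m with
  | zero => simp
  | succ m ih =>
    have hmono : (a + m - 1).choose r ≤ (a + m).choose r :=
      Nat.choose_le_choose r (Nat.sub_le _ _)
    have hmul := Nat.mul_le_mul_left m hmono
    rw [← add_assoc, Nat.choose_succ_succ', Nat.add_sub_cancel, add_mul, one_mul]
    omega

theorem one_sub_le_inv_choose_mul_choose {k ℓ a : ℕ} (hℓ : 0 < ℓ) (hℓk : ℓ ≤ k) (hak : a ≤ k) :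
    1 - ((k : ℝ) - a) * (ℓ / k) ≤ (k.choose ℓ : ℝ)⁻¹ * a.choose ℓ := by
  obtain ⟨r, rfl⟩ : ∃ r, ℓ = r + 1 := ⟨ℓ - 1, by omega⟩
  obtain ⟨m, rfl⟩ := Nat.exists_eq_add_of_le hak
  obtain ⟨q, hq⟩ : ∃ q, a + m = q + 1 := ⟨a + m - 1, by omega⟩
  have hbound := choose_add_succ_le a m r
  have habs := Nat.add_one_mul_choose_eq q r
  have hpos : 0 < (a + m).choose (r + 1) := Nat.choose_pos hℓk
  have hqm : (a : ℝ) + m = q + 1 := by exact_mod_cast hq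
  rw [hq] at hbound hpos ⊢
  rw [Nat.add_sub_cancel] at hbound
  have hbound' : ((q + 1).choose (r + 1) : ℝ) ≤ a.choose (r + 1) + m * q.choose r := by
    exact_mod_cast hbound
  have habs' : ((q : ℝ) + 1) * q.choose r = (q + 1).choose (r + 1) * (r + 1) := by
    exact_mod_cast habs
  have hpos' : (0 : ℝ) < (q + 1).choose (r + 1) := by exact_mod_cast hpos
  have hquot : ((q + 1).choose (r + 1) : ℝ) * ((r + 1) / (q + 1)) = q.choose r := by
    field_simp
    linarith
  have hm : ((q + 1 : ℕ) : ℝ) - a = m := by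
    push_cast
    linarith
  rw [hm, inv_mul_eq_div, le_div_iff₀ hpos']
  push_cast
  calc (1 - (m : ℝ) * ((r + 1) / (q + 1))) * (q + 1).choose (r + 1)
      = (q + 1).choose (r + 1) - m * ((q + 1).choose (r + 1) * ((r + 1) / (q + 1))) := by ring
    _ ≤ a.choose (r + 1) := by
      rw [hquot]
      linarith

/-- The marginals over a set `A` sum to the expected size of the intersection with `A`. -/
theorem sum_marginals_eq {α : Type*} [Fintype α] [DecidableEq α] (μ : Finset α → ℝ)
    (A : Finset α) :
    ∑ i ∈ A, ∑ S ∈ univ.filter (fun S : Finset α => i ∈ S), μ S = ∑ S, μ S * (S ∩ A).card := by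
  simp_rw [sum_filter]
  rw [sum_comm]
  refine sum_congr rfl fun S _ => ?_
  rw [← sum_filter, sum_const, nsmul_eq_mul, mul_comm, filter_mem_eq_inter, inter_comm]

/-- The mass of the downed distribution on the `ℓ`-subsets of `R`. -/
theorem sum_down_eq {α : Type*} [Fintype α] [DecidableEq α] (μ : Finset α → ℝ)
    (R : Finset α) (ℓ : ℕ) (c : ℝ) :
    ∑ T ∈ univ.filter (fun T : Finset α => T.card = ℓ ∧ T ⊆ R),
        c * ∑ S ∈ univ.filter (fun S : Finset α => T ⊆ S), μ S =
      ∑ S, μ S * (c * (S ∩ R).card.choose ℓ) := by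
  rw [← mul_sum]
  simp_rw [sum_filter (fun S : Finset α => _ ⊆ S)]
  rw [sum_comm, mul_sum]
  refine sum_congr rfl fun S _ => ?_
  have hset : (univ.filter (fun T : Finset α => T.card = ℓ ∧ T ⊆ R)).filter (fun T => T ⊆ S) =
      powersetCard ℓ (S ∩ R) := by
    ext T
    simp only [mem_filter, mem_univ, true_and, mem_powersetCard, subset_inter_iff]
    tauto
  rw [← sum_filter, hset, sum_const, card_powersetCard, nsmul_eq_mul]
  ring

/-- Marginal lower bound for the isotropic transformation, and mass of the
downed distribution on elements with large marginals: (a) if `p_i ≥ √β·k/n` then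
`p_i/t_i ≥ k/((1+√β)·|U|)`; (b) with `R̄ = {i : p_i ≥ √β·k/n}`,
`∑_{T ∈ binom(R̄,ℓ)} μ_ℓ(T) ≥ 1 − √β·ℓ`. -/
theorem isotropic_transformation_marginal_lower_bound (n k ℓ : ℕ)
    (hℓ : 0 < ℓ) (hℓk : ℓ ≤ k) (hkn : k ≤ n)
    (β : ℝ) (hβ : β ∈ Set.Ioo (0 : ℝ) 1)
    (μ : Finset (Fin n) → ℝ)
    (hnn : ∀ S, 0 ≤ μ S) (hsupp : ∀ S, μ S ≠ 0 → S.card = k)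
    (hsum : ∑ S, μ S = 1)
    (p : Fin n → ℝ)
    (hp : ∀ i, p i = ∑ S ∈ univ.filter (fun S : Finset (Fin n) => i ∈ S), μ S)
    (t : Fin n → ℕ) (ht : ∀ i, t i = ⌈((n : ℝ) / (β * k)) * p i⌉₊)
    (Ucard : ℕ) (hU : Ucard = ∑ i, t i)
    (R : Finset (Fin n)) (hR : R = univ.filter (fun i => Real.sqrt β * k / n ≤ p i)) :
    (∀ i, Real.sqrt β * k / n ≤ p i →
      (k : ℝ) / ((1 + Real.sqrt β) * Ucard) ≤ p i / (t i : ℝ)) ∧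
    (1 - Real.sqrt β * ℓ ≤
      ∑ T ∈ univ.filter (fun T : Finset (Fin n) => T.card = ℓ ∧ T ⊆ R),
        ((k.choose ℓ : ℝ))⁻¹ *
          ∑ S ∈ univ.filter (fun S : Finset (Fin n) => T ⊆ S), μ S) := by
  have hk : (0 : ℝ) < k := by exact_mod_cast hℓ.trans_le hℓk
  have hn : (0 : ℝ) < n := by exact_mod_cast (hℓ.trans_le hℓk).trans_le hkn
  have hβ0 : 0 < β := hβ.1
  have hs : 0 < √β := Real.sqrt_pos.2 hβ0
  have hss : √β * √β = β := Real.mul_self_sqrt hβ0.le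
  constructor
  · intro i hi
    have hpsum : ∑ i, p i = k := by
      simp_rw [hp]
      rw [sum_marginals_eq]
      calc ∑ S, μ S * ((S ∩ univ).card : ℝ) = ∑ S, μ S * k := by
            refine sum_congr rfl fun S _ => ?_
            by_cases h : μ S = 0
            · simp [h]
            · rw [inter_univ, hsupp S h]
        _ = k := by rw [← sum_mul, hsum, one_mul]
    have hUlow : (n : ℝ) / β ≤ Ucard := by
      calc (n : ℝ) / β = ∑ i, (n : ℝ) / (β * k) * p i := by
            rw [← mul_sum, hpsum]
            field_simp
        _ ≤ ∑ i, (t i : ℝ) := sum_le_sum fun i _ => by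
            rw [ht]
            exact Nat.le_ceil _
        _ = Ucard := by
            rw [hU]
            push_cast
            rfl
    have hUpos : (0 : ℝ) < Ucard := (div_pos hn hβ0).trans_le hUlow
    have hpi : 0 < p i := lt_of_lt_of_le (by positivity) hi
    have hx : 0 < (n : ℝ) / (β * k) * p i := by positivity
    have htpos : (0 : ℝ) < t i := by
      rw [ht]
      exact_mod_cast Nat.ceil_pos.2 hx
    have htlt : (t i : ℝ) < (n : ℝ) / (β * k) * p i + 1 := by
      rw [ht]
      exact Nat.ceil_lt_add_one hx.le
    have hone : 1 ≤ √β * ((n : ℝ) / (β * k) * p i) := by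
      calc (1 : ℝ) = √β * ((n : ℝ) / (β * k) * (√β * k / n)) := by
            field_simp
            rw [sq, hss]
        _ ≤ √β * ((n : ℝ) / (β * k) * p i) := by gcongr
    rw [div_le_div_iff₀ (by positivity) htpos]
    calc (k : ℝ) * t i ≤ k * ((1 + √β) * ((n : ℝ) / (β * k) * p i)) := by
          gcongr
          linarith
      _ = p i * ((1 + √β) * (n / β)) := by
          field_simp
      _ ≤ p i * ((1 + √β) * Ucard) := by gcongr
  · rw [sum_down_eq]
    have hout : ∑ S, μ S * ((S ∩ Rᶜ).card : ℝ) ≤ √β * k := by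
      rw [← sum_marginals_eq]
      calc ∑ i ∈ Rᶜ, ∑ S ∈ univ.filter (fun S : Finset (Fin n) => i ∈ S), μ S
          ≤ ∑ _i ∈ Rᶜ, √β * k / n := sum_le_sum fun i hi => by
            rw [← hp]
            simp only [hR, mem_compl, mem_filter, mem_univ, true_and, not_le] at hi
            exact hi.le
        _ ≤ ∑ _i : Fin n, √β * k / n :=
            sum_le_sum_of_subset_of_nonneg (subset_univ _) fun _ _ _ => by positivity
        _ = √β * k := by
            rw [sum_const, card_univ, Fintype.card_fin, nsmul_eq_mul]
            field_simp
    calc 1 - √β * ℓ = 1 - √β * k * (ℓ / k) := by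
          field_simp
      _ ≤ 1 - (∑ S, μ S * ((S ∩ Rᶜ).card : ℝ)) * (ℓ / k) := by gcongr
      _ = ∑ S, μ S * (1 - ((S ∩ Rᶜ).card : ℝ) * (ℓ / k)) := by
          simp_rw [mul_sub, mul_one, ← mul_assoc]
          rw [sum_sub_distrib, hsum, sum_mul]
      _ ≤ ∑ S, μ S * ((k.choose ℓ : ℝ)⁻¹ * ((S ∩ R).card.choose ℓ : ℝ)) := by
          refine sum_le_sum fun S _ => ?_
          by_cases h : μ S = 0
          · simp [h]
          · refine mul_le_mul_of_nonneg_left ?_ (hnn S)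
            have hS := hsupp S h
            have hsplit : (S ∩ R).card + (S ∩ Rᶜ).card = k := by
              rw [← hS, ← sdiff_eq_inter_compl, card_inter_add_card_sdiff]
            have hsplit' : ((S ∩ Rᶜ).card : ℝ) = k - (S ∩ R).card := by
              rw [← hsplit]
              push_cast
              ring
            rw [hsplit']
            exact one_sub_le_inv_choose_mul_choose hℓ hℓk (by omega)
end

section
/- Let α ∈ (0,1] and let μ be a (1/α)-entropically independent probability distribution on binom([n],k) with marginals p_i = P_{T∼μ}[i∈T]. Let t be an integer with 0 ≤ t ≤ k/2 and let S ∈ binom([n],t) satisfy P_{T∼μ}[S ⊆ T] > 0. Define the conditional marginal distribution μ_{t+1|S} on [n]∖S by μ_{t+1|S}(i) = P_{T∼μ}[i∈T | S⊆T]/(k−t). Then ∑_{i∉S} μ_{t+1|S}(i) · log(k·μ_{t+1|S}(i)/p_i) ≤ (2/(αk))·log(1/P_{T∼μ}[S⊆T]) + 2t/k. -/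
open Finset

/-- Double counting: the marginals of a weight on `k`-sets sum to `k` times its total mass. -/
lemma sum_marginals_eq_s6 {n k : ℕ} (ν : Finset (Fin n) → ℝ) (hν : ∀ T, ν T ≠ 0 → T.card = k) :
    ∑ i, ∑ T ∈ univ.filter (fun T : Finset (Fin n) => i ∈ T), ν T = k * ∑ T, ν T := by
  simp_rw [sum_filter]
  rw [sum_comm, mul_sum]
  refine sum_congr rfl fun T _ => ?_
  rw [← sum_filter, sum_const, nsmul_eq_mul, filter_univ_mem]
  by_cases h : ν T = 0
  · simp [h]
  · rw [hν T h]

/-- The divergence of a conditioned weight from the original one is `log (1 / P)`. -/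
lemma sum_cond_mul_log {ι : Type*} [Fintype ι] (μ : ι → ℝ) (E : ι → Prop) [DecidablePred E]
    (hpos : 0 < ∑ T ∈ univ.filter E, μ T) :
    ∑ T, (if E T then μ T / ∑ T ∈ univ.filter E, μ T else 0) *
        Real.log ((if E T then μ T / ∑ T ∈ univ.filter E, μ T else 0) / μ T) =
      Real.log (1 / ∑ T ∈ univ.filter E, μ T) := by
  set P := ∑ T ∈ univ.filter E, μ T with hP
  have hterm : ∀ T, (if E T then μ T / P else 0) *
      Real.log ((if E T then μ T / P else 0) / μ T) =
      if E T then μ T * (Real.log (1 / P) / P) else 0 := by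
    intro T
    by_cases hE : E T
    · by_cases h0 : μ T = 0
      · simp [h0]
      · have : μ T / P / μ T = 1 / P := by field_simp
        simp only [hE, if_true, this]
        ring
    · simp [hE]
  simp_rw [hterm]
  rw [← sum_filter, ← sum_mul, ← hP]
  field_simp

/-- KL-divergence bound on the conditional marginal distribution of an
entropically independent distribution:
`DKL(μ_{t+1|S} ‖ p/k) ≤ (2/(αk))·log(1/P[S⊆T]) + 2t/k`. -/
theorem cond_marginal_kl_bound (n k : ℕ) (hk : 0 < k)
    (α : ℝ) (hα : α ∈ Set.Ioc (0 : ℝ) 1)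
    (μ : Finset (Fin n) → ℝ)
    (hnn : ∀ S, 0 ≤ μ S) (hsupp : ∀ S, μ S ≠ 0 → S.card = k)
    (hsum : ∑ S, μ S = 1)
    -- μ is (1/α)-entropically independent
    (hEI : ∀ ν : Finset (Fin n) → ℝ, (∀ S, 0 ≤ ν S) → (∀ S, ν S ≠ 0 → S.card = k) →
      (∑ S, ν S = 1) → (∀ S, μ S = 0 → ν S = 0) →
      ∑ i : Fin n,
          ((∑ S ∈ univ.filter (fun S : Finset (Fin n) => i ∈ S), ν S) / k) *
            Real.log (((∑ S ∈ univ.filter (fun S : Finset (Fin n) => i ∈ S), ν S) / k) /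
              ((∑ S ∈ univ.filter (fun S : Finset (Fin n) => i ∈ S), μ S) / k)) ≤
        1 / (α * k) * ∑ S, ν S * Real.log (ν S / μ S))
    (p : Fin n → ℝ)
    (hp : ∀ i, p i = ∑ S ∈ univ.filter (fun S : Finset (Fin n) => i ∈ S), μ S)
    (t : ℕ) (ht : 2 * t ≤ k)
    (S : Finset (Fin n)) (hS : S.card = t)
    (hpos : 0 < ∑ T ∈ univ.filter (fun T : Finset (Fin n) => S ⊆ T), μ T)
    -- conditional marginal distribution μ_{t+1|S}
    (q : Fin n → ℝ)
    (hq : ∀ i, q i =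
      (∑ T ∈ univ.filter (fun T : Finset (Fin n) => S ⊆ T ∧ i ∈ T), μ T) /
        (∑ T ∈ univ.filter (fun T : Finset (Fin n) => S ⊆ T), μ T) / ((k : ℝ) - t)) :
    ∑ i ∈ univ \ S, q i * Real.log ((k : ℝ) * q i / p i) ≤
      2 / (α * k) *
          Real.log (1 / ∑ T ∈ univ.filter (fun T : Finset (Fin n) => S ⊆ T), μ T) +
        2 * t / k := by
  set P := ∑ T ∈ univ.filter (fun T : Finset (Fin n) => S ⊆ T), μ T with hP
  set m : Fin n → ℝ := fun i =>
    (∑ T ∈ univ.filter (fun T : Finset (Fin n) => S ⊆ T ∧ i ∈ T), μ T) / P with hm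
  set ν : Finset (Fin n) → ℝ := fun T => if S ⊆ T then μ T / P else 0 with hν
  have hνsum : ∑ T, ν T = 1 := by
    simp only [hν]
    rw [← sum_filter, ← sum_div, ← hP, div_self hpos.ne']
  have hνm : ∀ i, ∑ T ∈ univ.filter (fun T : Finset (Fin n) => i ∈ T), ν T = m i := by
    intro i
    simp only [hν, hm]
    rw [← sum_filter, filter_filter, sum_div]
    simp only [and_comm]
  have hνsupp : ∀ T, ν T ≠ 0 → T.card = k := by
    intro T hT
    refine hsupp T fun h0 => hT ?_
    simp [hν, h0]
  have hνnn : ∀ T, 0 ≤ ν T := by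
    intro T
    simp only [hν]
    split_ifs
    · exact div_nonneg (hnn T) hpos.le
    · exact le_rfl
  have hkl := hEI ν hνnn hνsupp hνsum (fun T h0 => by simp [hν, h0])
  simp only [hνm, ← hp] at hkl
  rw [show ∑ T, ν T * Real.log (ν T / μ T) = Real.log (1 / P) from
    sum_cond_mul_log μ (fun T => S ⊆ T) hpos] at hkl
  have hkR : (0 : ℝ) < k := by exact_mod_cast hk
  have htR : 2 * (t : ℝ) ≤ k := by exact_mod_cast ht
  have ht0 : (0 : ℝ) ≤ t := Nat.cast_nonneg t
  have hkt : (0 : ℝ) < k - t := by linarith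
  have hm0 : ∀ i, 0 ≤ m i := fun i => div_nonneg (sum_nonneg fun T _ => hnn T) hpos.le
  have hmS : ∀ i ∈ S, m i = 1 := by
    intro i hi
    simp only [hm]
    rw [show univ.filter (fun T : Finset (Fin n) => S ⊆ T ∧ i ∈ T) =
      univ.filter (fun T : Finset (Fin n) => S ⊆ T) from
      filter_congr fun T _ => and_iff_left_of_imp fun h => h hi, ← hP, div_self hpos.ne']
  have hp0 : ∀ i, 0 ≤ p i := fun i => by
    rw [hp]
    exact sum_nonneg fun T _ => hnn T
  have hp1 : ∀ i, p i ≤ 1 := fun i => by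
    rw [hp, ← hsum]
    exact sum_le_sum_of_subset_of_nonneg (filter_subset _ _) fun T _ _ => hnn T
  have hmp : ∀ i, m i * P ≤ p i := fun i => by
    simp only [hm]
    rw [div_mul_cancel₀ _ hpos.ne', hp]
    refine sum_le_sum_of_subset_of_nonneg (fun T hT => ?_) fun T _ _ => hnn T
    simp only [mem_filter, mem_univ, true_and] at hT ⊢
    exact hT.2
  have hP1 : P ≤ 1 := by
    rw [← hsum]
    exact sum_le_sum_of_subset_of_nonneg (filter_subset _ _) fun T _ _ => hnn T
  have hL : 0 ≤ Real.log (1 / P) := Real.log_nonneg (one_le_one_div hpos hP1)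
  have hmsum : ∑ i ∈ univ \ S, m i = k - t := by
    have hall : ∑ i, m i = k := by
      have := sum_marginals_eq_s6 ν hνsupp
      simpa only [hνm, hνsum, mul_one] using this
    have hSsum : ∑ i ∈ S, m i = t := by
      rw [sum_congr rfl hmS]
      simp [hS]
    have := sum_sdiff (f := m) (subset_univ S)
    linarith
  have hA : ∑ i ∈ univ \ S, m i * Real.log (m i / p i) ≤ 1 / α * Real.log (1 / P) := by
    have hcancel : ∀ i, m i / k * Real.log (m i / k / (p i / k)) =
        m i * Real.log (m i / p i) / k := fun i => by
      rw [div_div_div_cancel_right₀ hkR.ne']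
      ring
    simp only [hcancel] at hkl
    rw [← sum_div, div_le_iff₀ hkR] at hkl
    have hSnn : 0 ≤ ∑ i ∈ S, m i * Real.log (m i / p i) := by
      refine sum_nonneg fun i hi => ?_
      have hpi : 0 < p i := by
        have := hmp i
        rw [hmS i hi, one_mul] at this
        exact hpos.trans_le this
      rw [hmS i hi, one_mul]
      exact Real.log_nonneg (one_le_one_div hpi (hp1 i))
    have hsplit := sum_sdiff (f := fun i => m i * Real.log (m i / p i)) (subset_univ S)
    have hα0 := hα.1.ne'
    have : 1 / (α * k) * Real.log (1 / P) * k = 1 / α * Real.log (1 / P) := by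
      field_simp
    linarith
  have hterm : ∀ i, q i * Real.log (k * q i / p i) =
      (m i * Real.log (m i / p i) + m i * Real.log (k / (k - t))) / (k - t) := by
    intro i
    have hqi : q i = m i / (k - t) := hq i
    rw [hqi]
    rcases (hm0 i).eq_or_lt with h0 | h0
    · simp [← h0]
    · have hpi : 0 < p i := (mul_pos h0 hpos).trans_le (hmp i)
      rw [show k * (m i / (k - t)) / p i = m i / p i * (k / (k - t)) by ring,
        Real.log_mul (by positivity) (by positivity)]
      ring
  simp_rw [hterm]
  rw [← sum_div, sum_add_distrib, ← sum_mul, hmsum, add_div, mul_div_cancel_left₀ _ hkt.ne']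
  have hhalf : (k : ℝ) / 2 ≤ k - t := by linarith
  have hα0 := hα.1
  refine add_le_add ?_ ?_
  · calc _ ≤ 1 / α * Real.log (1 / P) / (k - t) := by gcongr
      _ ≤ 1 / α * Real.log (1 / P) / (k / 2) := by gcongr
      _ = 2 / (α * k) * Real.log (1 / P) := by field_simp
  · calc _ ≤ (k : ℝ) / (k - t) - 1 := Real.log_le_sub_one_of_pos (by positivity)
      _ = t / (k - t) := by
        field_simp
        ring
      _ ≤ t / (k / 2) := by gcongr
      _ = 2 * t / k := by field_simp
end

section
/- Let α ∈ (0,1] and let μ be a (1/α)-entropically independent probability distribution on binom([n],k) with marginals p_i. Let t be an integer with 1 ≤ t ≤ k/2. Then ∑_{S∈binom([n],t)} μ_t(S) · DKL(μ_{t+1|S} ‖ p/k) ≤ (2t/k)·((1/α)·log(2n/k) + 1), where μ_t = μD_{k→t}, DKL(μ_{t+1|S}‖p/k) = ∑_{i∉S} μ_{t+1|S}(i)·log(k·μ_{t+1|S}(i)/p_i), and summands with μ_t(S) = 0 are interpreted as 0. -/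
open Finset

theorem choose_mul_pow_le_two_mul_pow_mul_choose {n k t : ℕ} (ht : 2 * t ≤ k) :
    n.choose t * k ^ t ≤ (2 * n) ^ t * k.choose t := by
  induction t with
  | zero => simp
  | succ t ih =>
    have ih := ih (by omega)
    have hfactor : (n - t) * k ≤ 2 * n * (k - t) :=
      calc (n - t) * k ≤ n * (2 * (k - t)) := Nat.mul_le_mul (by omega) (by omega)
        _ = 2 * n * (k - t) := by ring
    refine Nat.le_of_mul_le_mul_right ?_ (Nat.succ_pos t)
    calc n.choose (t + 1) * k ^ (t + 1) * (t + 1)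
        = n.choose (t + 1) * (t + 1) * k ^ (t + 1) := by ring
      _ = (n.choose t * k ^ t) * ((n - t) * k) := by rw [Nat.choose_succ_right_eq]; ring
      _ ≤ ((2 * n) ^ t * k.choose t) * (2 * n * (k - t)) := Nat.mul_le_mul ih hfactor
      _ = (2 * n) ^ (t + 1) * (k.choose t * (k - t)) := by ring
      _ = (2 * n) ^ (t + 1) * k.choose (t + 1) * (t + 1) := by
        rw [← Nat.choose_succ_right_eq]; ring

section SupersetMass

variable {ι : Type*} [Fintype ι] [DecidableEq ι] {μ : Finset ι → ℝ} {k : ℕ}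

theorem sum_card_eq_sum_superset (hsupp : ∀ T, μ T ≠ 0 → T.card = k) (t : ℕ) :
    ∑ S ∈ univ.filter (fun S : Finset ι => S.card = t), ∑ T ∈ univ.filter (S ⊆ ·), μ T =
      k.choose t * ∑ T, μ T := by
  simp_rw [sum_filter _ μ]
  rw [sum_comm, mul_sum]
  refine sum_congr rfl fun T _ => ?_
  by_cases hT : μ T = 0
  · simp [hT]
  · have hpow : (univ.filter (fun S : Finset ι => S.card = t)).filter (· ⊆ T) =
        powersetCard t T := by
      ext S
      simp [mem_powersetCard, and_comm]
    rw [← sum_filter, hpow, sum_const, card_powersetCard, hsupp T hT, nsmul_eq_mul]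

theorem sum_sdiff_sum_superset_mem (hsupp : ∀ T, μ T ≠ 0 → T.card = k) (S : Finset ι) :
    ∑ i ∈ univ \ S, ∑ T ∈ univ.filter (fun T => S ⊆ T ∧ i ∈ T), μ T =
      ((k : ℝ) - S.card) * ∑ T ∈ univ.filter (S ⊆ ·), μ T := by
  simp_rw [sum_filter]
  rw [sum_comm, mul_sum]
  refine sum_congr rfl fun T _ => ?_
  by_cases hT : μ T = 0
  · simp [hT]
  by_cases hST : S ⊆ T
  · have hfil : (univ \ S).filter (· ∈ T) = T \ S := by
      ext i
      simp [and_comm]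
    simp only [hST, true_and, if_true]
    rw [← sum_filter, hfil, sum_const, nsmul_eq_mul, card_sdiff_of_subset hST,
      Nat.cast_sub (card_le_card hST), hsupp T hT]
  · simp [hST]

end SupersetMass

/-- If the marginals `r` of a law conditioned on containing `S` have divergence at most `A` from
`p`, this bounds the divergence from `p` of the marginals renormalized outside `S`. -/
theorem sum_sdiff_mul_log_le {ι : Type*} [Fintype ι] [DecidableEq ι] {S : Finset ι} {k A : ℝ}
    {r p : ι → ℝ} (hSk : (S.card : ℝ) < k) (hrS : ∀ i ∈ S, r i = 1)
    (hp0 : ∀ i, 0 ≤ p i) (hp1 : ∀ i, p i ≤ 1) (hrp : ∀ i, p i = 0 → r i = 0)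
    (hsum : ∑ i ∈ univ \ S, r i = k - S.card)
    (hA : ∑ i, r i / k * Real.log ((r i / k) / (p i / k)) ≤ A) :
    ∑ i ∈ univ \ S, r i / (k - S.card) * Real.log (k * (r i / (k - S.card)) / p i) ≤
      S.card / (k - S.card) + k / (k - S.card) * A := by
  have hd : 0 < k - S.card := sub_pos.mpr hSk
  have hk : 0 < k := lt_of_le_of_lt (Nat.cast_nonneg _) hSk
  have hterm : ∀ i, r i / (k - S.card) * Real.log (k * (r i / (k - S.card)) / p i) =
      k / (k - S.card) * (r i / k * Real.log ((r i / k) / (p i / k))) +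
        r i * (Real.log (k / (k - S.card)) / (k - S.card)) := by
    intro i
    by_cases hr : r i = 0
    · simp [hr]
    have hpi : p i ≠ 0 := fun h => hr (hrp i h)
    have hsplit : k * (r i / (k - S.card)) / p i =
        ((r i / k) / (p i / k)) * (k / (k - S.card)) := by
      field_simp
    rw [hsplit, Real.log_mul (by positivity) (by positivity)]
    field_simp
  have hinside : 0 ≤ ∑ i ∈ S, r i / k * Real.log ((r i / k) / (p i / k)) := by
    refine sum_nonneg fun i hi => ?_
    rw [div_div_div_cancel_right₀ hk.ne', hrS i hi, one_div (p i), Real.log_inv]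
    exact mul_nonneg (by positivity) (neg_nonneg.mpr (Real.log_nonpos (hp0 i) (hp1 i)))
  have houtside : ∑ i ∈ univ \ S, r i / k * Real.log ((r i / k) / (p i / k)) ≤ A := by
    have := sum_sdiff (f := fun i => r i / k * Real.log ((r i / k) / (p i / k))) (subset_univ S)
    linarith
  have hlog : Real.log (k / (k - S.card)) ≤ S.card / (k - S.card) := by
    refine (Real.log_le_sub_one_of_pos (by positivity)).trans_eq ?_
    field_simp
    ring
  rw [sum_congr rfl fun i _ => hterm i, sum_add_distrib, ← mul_sum, ← sum_mul, hsum,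
    mul_div_cancel₀ _ hd.ne', add_comm]
  gcongr

/-- A form of Jensen's inequality: the mean of `log (1 / P)` under the weights `P / c` is at most
`log R` as soon as the index set has at most `R * c` elements. -/
theorem sum_inv_mul_mul_log_inv_le {β : Type*} {s : Finset β} {P : β → ℝ} {c R : ℝ}
    (hP : ∀ S ∈ s, 0 ≤ P S) (hc : 0 < c) (hR : 0 < R) (hsum : ∑ S ∈ s, P S = c)
    (hcard : (s.card : ℝ) ≤ R * c) :
    ∑ S ∈ s, c⁻¹ * P S * Real.log (P S)⁻¹ ≤ Real.log R := by
  have hterm : ∀ S ∈ s, c⁻¹ * P S * Real.log (P S)⁻¹ ≤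
      P S * (c⁻¹ * (Real.log R - 1)) + (R * c)⁻¹ := by
    intro S hS
    rcases (hP S hS).eq_or_lt with h0 | hpos
    · rw [← h0]
      simp only [mul_zero, zero_mul, zero_add]
      positivity
    have hlog := Real.log_le_sub_one_of_pos (x := (R * P S)⁻¹) (by positivity)
    rw [mul_inv, Real.log_mul (by positivity) (by positivity), Real.log_inv R] at hlog
    calc c⁻¹ * P S * Real.log (P S)⁻¹
        ≤ c⁻¹ * P S * (Real.log R - 1 + R⁻¹ * (P S)⁻¹) := by gcongr; linarith
      _ = P S * (c⁻¹ * (Real.log R - 1)) + (R * c)⁻¹ := by field_simp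
  refine (sum_le_sum hterm).trans ?_
  rw [sum_add_distrib, ← sum_mul, hsum, sum_const, nsmul_eq_mul, mul_inv_cancel_left₀ hc.ne']
  have : (s.card : ℝ) * (R * c)⁻¹ ≤ 1 := by
    rw [← div_eq_mul_inv]
    exact div_le_one_of_le₀ hcard (by positivity)
  linarith

/-- Average KL-divergence bound over conditioning sets, for an
entropically independent distribution:
`∑_S μ_t(S)·DKL(μ_{t+1|S} ‖ p/k) ≤ (2t/k)·((1/α)·log(2n/k) + 1)`. -/
theorem average_cond_marginal_kl_bound (n k : ℕ) (hk : 0 < k) (hkn : k ≤ n)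
    (α : ℝ) (hα : α ∈ Set.Ioc (0 : ℝ) 1)
    (μ : Finset (Fin n) → ℝ)
    (hnn : ∀ S, 0 ≤ μ S) (hsupp : ∀ S, μ S ≠ 0 → S.card = k)
    (hsum : ∑ S, μ S = 1)
    -- μ is (1/α)-entropically independent
    (hEI : ∀ ν : Finset (Fin n) → ℝ, (∀ S, 0 ≤ ν S) → (∀ S, ν S ≠ 0 → S.card = k) →
      (∑ S, ν S = 1) → (∀ S, μ S = 0 → ν S = 0) →
      ∑ i : Fin n,
          ((∑ S ∈ univ.filter (fun S : Finset (Fin n) => i ∈ S), ν S) / k) *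
            Real.log (((∑ S ∈ univ.filter (fun S : Finset (Fin n) => i ∈ S), ν S) / k) /
              ((∑ S ∈ univ.filter (fun S : Finset (Fin n) => i ∈ S), μ S) / k)) ≤
        1 / (α * k) * ∑ S, ν S * Real.log (ν S / μ S))
    (p : Fin n → ℝ)
    (hp : ∀ i, p i = ∑ S ∈ univ.filter (fun S : Finset (Fin n) => i ∈ S), μ S)
    (t : ℕ) (ht1 : 1 ≤ t) (ht2 : 2 * t ≤ k)
    -- conditional marginal distributions μ_{t+1|S}
    (q : Finset (Fin n) → Fin n → ℝ)
    (hq : ∀ S i, q S i =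
      (∑ T ∈ univ.filter (fun T : Finset (Fin n) => S ⊆ T ∧ i ∈ T), μ T) /
        (∑ T ∈ univ.filter (fun T : Finset (Fin n) => S ⊆ T), μ T) / ((k : ℝ) - t)) :
    ∑ S ∈ univ.filter (fun S : Finset (Fin n) => S.card = t),
        ((k.choose t : ℝ))⁻¹ * (∑ T ∈ univ.filter (fun T : Finset (Fin n) => S ⊆ T), μ T) *
          (∑ i ∈ univ \ S, q S i * Real.log ((k : ℝ) * q S i / p i)) ≤
      2 * t / k * (1 / α * Real.log (2 * n / k) + 1) := by
  obtain ⟨hα0, -⟩ := hα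
  have hkR : (0 : ℝ) < k := by exact_mod_cast hk
  have hnR : (0 : ℝ) < n := by exact_mod_cast hk.trans_le hkn
  have htR : (2 : ℝ) * t ≤ k := by exact_mod_cast ht2
  have ht0 : (1 : ℝ) ≤ t := by exact_mod_cast ht1
  have hd : (0 : ℝ) < k - t := by linarith
  have hc : (0 : ℝ) < k.choose t := by exact_mod_cast Nat.choose_pos (by omega)
  have hR : (0 : ℝ) < 2 * n / k := by positivity
  set P : Finset (Fin n) → ℝ := fun S => ∑ T ∈ univ.filter (fun T => S ⊆ T), μ T with hPdef
  have hP0 : ∀ S, 0 ≤ P S := fun S => sum_nonneg fun T _ => hnn T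
  have hP1 : ∀ S, P S ≤ 1 := fun S => by
    rw [← hsum]
    exact sum_le_univ_sum_of_nonneg hnn
  have hp0 : ∀ i, 0 ≤ p i := fun i => by
    rw [hp]
    exact sum_nonneg fun T _ => hnn T
  have hp1 : ∀ i, p i ≤ 1 := fun i => by
    rw [hp, ← hsum]
    exact sum_le_univ_sum_of_nonneg hnn
  have hdiv : ∀ S, S.card = t → 0 < P S →
      ∑ i ∈ univ \ S, q S i * Real.log ((k : ℝ) * q S i / p i) ≤
        2 * t / k + 2 / (α * k) * Real.log (P S)⁻¹ := by
    intro S hS hPS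
    set ν : Finset (Fin n) → ℝ := fun T => if S ⊆ T then μ T / P S else 0 with hν
    have hmarg : ∀ i, ∑ T ∈ univ.filter (fun T : Finset (Fin n) => i ∈ T), ν T =
        (∑ T ∈ univ.filter (fun T : Finset (Fin n) => S ⊆ T ∧ i ∈ T), μ T) / P S := by
      intro i
      rw [sum_div, hν, ← sum_filter, filter_filter]
      simp only [and_comm]
    have hνsum : ∑ T, ν T = 1 := by
      rw [hν, ← sum_filter, ← sum_div]
      exact div_self hPS.ne'
    have hνlog : ∑ T, ν T * Real.log (ν T / μ T) = Real.log (P S)⁻¹ := by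
      rw [← one_mul (Real.log (P S)⁻¹), ← hνsum, sum_mul]
      refine sum_congr rfl fun T _ => ?_
      by_cases hT : ν T = 0
      · simp [hT]
      have hST : S ⊆ T := by
        by_contra h
        simp [hν, h] at hT
      have hμT : μ T ≠ 0 := by
        intro h
        simp [hν, h] at hT
      have hratio : ν T / μ T = (P S)⁻¹ := by
        simp only [hν, hST, if_true]
        field_simp
      rw [hratio]
    have hE := hEI ν
      (fun T => by
        simp only [hν]
        split_ifs
        · exact div_nonneg (hnn T) (hP0 S)
        · exact le_rfl)
      (fun T hT => hsupp T fun h => hT (by simp [hν, h]))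
      hνsum (fun T hT => by simp [hν, hT])
    rw [hνlog] at hE
    simp only [hmarg, ← hp] at hE
    have hmain := sum_sdiff_mul_log_le (S := S) (p := p) (by rw [hS]; linarith)
      (fun i hi => by
        have hfil : univ.filter (fun T : Finset (Fin n) => S ⊆ T ∧ i ∈ T) =
            univ.filter (fun T => S ⊆ T) :=
          filter_congr fun T _ => ⟨And.left, fun h => ⟨h, h hi⟩⟩
        rw [hfil]
        exact div_self hPS.ne')
      hp0 hp1
      (fun i hi => by
        rw [hp, sum_eq_zero_iff_of_nonneg fun T _ => hnn T] at hi
        rw [sum_eq_zero fun T hT => hi T (by simp_all), zero_div])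
      (by
        rw [← sum_div, sum_sdiff_sum_superset_mem hsupp]
        exact mul_div_cancel_right₀ _ hPS.ne')
      hE
    rw [hS] at hmain
    simp only [hq]
    refine hmain.trans (add_le_add ?_ ?_)
    · rw [div_le_div_iff₀ hd hkR]
      nlinarith
    · have hlog : 0 ≤ Real.log (P S)⁻¹ := Real.log_nonneg ((one_le_inv₀ hPS).mpr (hP1 S))
      rw [← mul_assoc]
      refine mul_le_mul_of_nonneg_right ?_ hlog
      rw [div_mul_div_comm, div_le_div_iff₀ (by positivity) (by positivity)]
      nlinarith [mul_pos (mul_pos hα0 hkR) hkR, mul_pos hα0 hkR]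
  have hPsum : ∑ S ∈ univ.filter (fun S : Finset (Fin n) => S.card = t), P S = k.choose t := by
    rw [sum_card_eq_sum_superset hsupp, hsum, mul_one]
  have hentropy := sum_inv_mul_mul_log_inv_le
    (s := univ.filter fun S : Finset (Fin n) => S.card = t)
    (fun S _ => hP0 S) hc (pow_pos hR t) hPsum (by
      have hcard : (univ.filter fun S : Finset (Fin n) => S.card = t).card = n.choose t := by
        rw [← powerset_univ, ← powersetCard_eq_filter, card_powersetCard, card_univ,
          Fintype.card_fin]
      have hchoose : (n.choose t * k ^ t : ℝ) ≤ (2 * n) ^ t * k.choose t := by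
        exact_mod_cast choose_mul_pow_le_two_mul_pow_mul_choose ht2
      rw [hcard, div_pow, div_mul_eq_mul_div, le_div_iff₀ (by positivity)]
      exact hchoose)
  rw [Real.log_pow] at hentropy
  calc ∑ S ∈ univ.filter (fun S : Finset (Fin n) => S.card = t),
        ((k.choose t : ℝ))⁻¹ * P S * ∑ i ∈ univ \ S, q S i * Real.log ((k : ℝ) * q S i / p i)
      ≤ ∑ S ∈ univ.filter (fun S : Finset (Fin n) => S.card = t),
        (P S * (((k.choose t : ℝ))⁻¹ * (2 * t / k)) +
          2 / (α * k) * (((k.choose t : ℝ))⁻¹ * P S * Real.log (P S)⁻¹)) := by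
        refine sum_le_sum fun S hS => ?_
        rcases (hP0 S).eq_or_lt with h0 | hpos
        · simp [← h0]
        · refine (mul_le_mul_of_nonneg_left (hdiv S (mem_filter.mp hS).2 hpos)
            (by positivity)).trans_eq ?_
          ring
    _ = 2 * t / k + 2 / (α * k) * ∑ S ∈ univ.filter (fun S : Finset (Fin n) => S.card = t),
          ((k.choose t : ℝ))⁻¹ * P S * Real.log (P S)⁻¹ := by
        rw [sum_add_distrib, ← sum_mul, ← mul_sum, hPsum, mul_inv_cancel_left₀ hc.ne']
    _ ≤ 2 * t / k + 2 / (α * k) * (t * Real.log (2 * n / k)) := by gcongr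
    _ = 2 * t / k * (1 / α * Real.log (2 * n / k) + 1) := by
        field_simp
        ring
end

section
/- Let μ be a probability distribution on binom([n],k) whose marginals p_i = P_{T∼μ}[i∈T] are all strictly positive. For 0 ≤ j ≤ k define μ_j = μD_{k→j} and μ'_j(S) := j!·∏_{i∈S}(p_i/k) for S ∈ binom([n],j) (so μ'_0(∅) = 1 and μ_0 is the point mass at ∅). Then for every 1 ≤ j ≤ k, DKL(μ_j ‖ μ'_j) − DKL(μ_{j−1} ‖ μ'_{j−1}) = ∑_{S∈binom([n],j−1)} μ_{j−1}(S) · DKL(μ_{j|S} ‖ p/k), where μ_{j|S}(i) := P_{T∼μ}[i∈T | S⊆T]/(k−j+1) for i ∈ [n]∖S, DKL(μ_{j|S}‖p/k) := ∑_{i∉S} μ_{j|S}(i)·log(k·μ_{j|S}(i)/p_i), and summands with μ_{j−1}(S) = 0 are interpreted as 0. -/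
open Finset

section

variable {α : Type*} [Fintype α] [DecidableEq α]

/-- The total weight that `μ` gives to the supersets of `S`. -/
def supersetSum (μ : Finset α → ℝ) (S : Finset α) : ℝ :=
  ∑ T ∈ univ.filter (fun T : Finset α => S ⊆ T), μ T

lemma supersetSum_nonneg {μ : Finset α → ℝ} (hnn : ∀ S, 0 ≤ μ S) (S : Finset α) :
    0 ≤ supersetSum μ S :=
  sum_nonneg fun T _ => hnn T

lemma supersetSum_anti {μ : Finset α → ℝ} (hnn : ∀ S, 0 ≤ μ S) {S R : Finset α} (h : S ⊆ R) :
    supersetSum μ R ≤ supersetSum μ S :=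
  sum_le_sum_of_subset_of_nonneg
    (fun T hT => by
      simp only [mem_filter, mem_univ, true_and] at hT ⊢
      exact h.trans hT)
    fun T _ _ => hnn T

/-- Pairs `(S, i)` with `#S = m`, `i ∉ S` correspond to pairs `(R, i)` with `#R = m + 1`, `i ∈ R`. -/
lemma sum_card_sum_insert (m : ℕ) (F : Finset α → ℝ) :
    ∑ S ∈ univ.filter (fun S : Finset α => S.card = m), ∑ i ∈ univ \ S, F (insert i S) =
      ((m : ℝ) + 1) * ∑ R ∈ univ.filter (fun R : Finset α => R.card = m + 1), F R := by
  have h : ∑ S ∈ univ.filter (fun S : Finset α => S.card = m), ∑ i ∈ univ \ S, F (insert i S) =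
      ∑ R ∈ univ.filter (fun R : Finset α => R.card = m + 1), ∑ _i ∈ R, F R := by
    rw [sum_sigma', sum_sigma']
    refine sum_bij' (fun x _ => ⟨insert x.2 x.1, x.2⟩) (fun x _ => ⟨x.1.erase x.2, x.2⟩)
      ?_ ?_ ?_ ?_ ?_
    · rintro ⟨S, i⟩ h
      simp only [mem_sigma, mem_filter, mem_univ, true_and, mem_sdiff] at h ⊢
      simp [card_insert_of_notMem h.2, h.1]
    · rintro ⟨R, i⟩ h
      simp only [mem_sigma, mem_filter, mem_univ, true_and, mem_sdiff] at h ⊢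
      simp [card_erase_of_mem h.2, h.1]
    · rintro ⟨S, i⟩ h
      simp only [mem_sigma, mem_filter, mem_univ, true_and, mem_sdiff] at h
      simp [erase_insert h.2]
    · rintro ⟨R, i⟩ h
      simp only [mem_sigma, mem_filter, mem_univ, true_and] at h
      simp [insert_erase h.2]
    · intros
      rfl
  rw [h, mul_sum]
  refine sum_congr rfl fun R hR => ?_
  rw [sum_const, nsmul_eq_mul, (mem_filter.1 hR).2]
  push_cast
  rfl

/-- Each `k`-element superset `T` of `S` is counted once for every element of `T \ S`. -/
lemma sum_supersetSum_insert {μ : Finset α → ℝ} {k : ℕ} (hsupp : ∀ S, μ S ≠ 0 → S.card = k)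
    (S : Finset α) :
    ∑ i ∈ univ \ S, supersetSum μ (insert i S) = ((k : ℝ) - S.card) * supersetSum μ S := by
  simp only [supersetSum, sum_filter]
  rw [sum_comm, mul_sum]
  refine sum_congr rfl fun T _ => ?_
  by_cases hST : S ⊆ T
  · have hfilter : (univ \ S).filter (fun i => insert i S ⊆ T) = T \ S := by
      ext i
      simp [insert_subset_iff, hST, and_comm]
    rw [← sum_filter, hfilter, sum_const, nsmul_eq_mul, if_pos hST, cast_card_sdiff hST]
    by_cases hT : μ T = 0
    · simp [hT]
    · rw [hsupp T hT]
  · rw [if_neg hST, mul_zero]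
    exact sum_eq_zero fun i _ => if_neg fun h => hST ((subset_insert i S).trans h)

end

lemma inv_choose_succ {k m : ℕ} (h : m < k) :
    ((k.choose (m + 1) : ℝ))⁻¹ = ((k.choose m : ℝ))⁻¹ * ((m : ℝ) + 1) / ((k : ℝ) - m) := by
  have hkm : (k : ℝ) - m ≠ 0 := sub_ne_zero.2 (by exact_mod_cast h.ne')
  have h₀ : (k.choose m : ℝ) ≠ 0 := by exact_mod_cast (Nat.choose_pos h.le).ne'
  have h₁ : (k.choose (m + 1) : ℝ) ≠ 0 := by exact_mod_cast (Nat.choose_pos h).ne'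
  have hmul : (k.choose (m + 1) : ℝ) * ((m : ℝ) + 1) = k.choose m * ((k : ℝ) - m) := by
    rw [← Nat.cast_sub h.le]
    exact_mod_cast Nat.choose_succ_right_eq k m
  field_simp
  linarith

/-- Chain rule of KL divergence for the sequential construction of a
sample from `μ_j = μ D_{k→j}` one element at a time, relative to the i.i.d. proposal
`μ'_j(S) = j!·∏_{i∈S} p_i/k`:
`DKL(μ_j‖μ'_j) − DKL(μ_{j−1}‖μ'_{j−1}) = ∑_S μ_{j−1}(S)·DKL(μ_{j|S} ‖ p/k)`. -/
theorem kl_chain_rule_down_operator (n k : ℕ) (hk : 0 < k) (hkn : k ≤ n)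
    (μ : Finset (Fin n) → ℝ)
    (hnn : ∀ S, 0 ≤ μ S) (hsupp : ∀ S, μ S ≠ 0 → S.card = k)
    (hsum : ∑ S, μ S = 1)
    (p : Fin n → ℝ)
    (hp : ∀ i, p i = ∑ S ∈ univ.filter (fun S : Finset (Fin n) => i ∈ S), μ S)
    (hppos : ∀ i, 0 < p i)
    (j : ℕ) (hj1 : 1 ≤ j) (hjk : j ≤ k)
    -- conditional marginal distributions μ_{j|S}
    (q : Finset (Fin n) → Fin n → ℝ)
    (hq : ∀ S i, q S i =
      (∑ T ∈ univ.filter (fun T : Finset (Fin n) => S ⊆ T ∧ i ∈ T), μ T) /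
        (∑ T ∈ univ.filter (fun T : Finset (Fin n) => S ⊆ T), μ T) /
          ((k : ℝ) - ((j - 1 : ℕ) : ℝ))) :
    (∑ S ∈ univ.filter (fun S : Finset (Fin n) => S.card = j),
        ((k.choose j : ℝ))⁻¹ * (∑ T ∈ univ.filter (fun T : Finset (Fin n) => S ⊆ T), μ T) *
          Real.log ((((k.choose j : ℝ))⁻¹ *
              (∑ T ∈ univ.filter (fun T : Finset (Fin n) => S ⊆ T), μ T)) /
            ((j.factorial : ℝ) * ∏ i ∈ S, p i / k))) -
      (∑ S ∈ univ.filter (fun S : Finset (Fin n) => S.card = j - 1),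
        ((k.choose (j - 1) : ℝ))⁻¹ *
            (∑ T ∈ univ.filter (fun T : Finset (Fin n) => S ⊆ T), μ T) *
          Real.log ((((k.choose (j - 1) : ℝ))⁻¹ *
              (∑ T ∈ univ.filter (fun T : Finset (Fin n) => S ⊆ T), μ T)) /
            (((j - 1).factorial : ℝ) * ∏ i ∈ S, p i / k))) =
    ∑ S ∈ univ.filter (fun S : Finset (Fin n) => S.card = j - 1),
      ((k.choose (j - 1) : ℝ))⁻¹ *
          (∑ T ∈ univ.filter (fun T : Finset (Fin n) => S ⊆ T), μ T) *
        (∑ i ∈ univ \ S, q S i * Real.log ((k : ℝ) * q S i / p i)) := by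
  obtain ⟨m, rfl⟩ : ∃ m, j = m + 1 := ⟨j - 1, by omega⟩
  simp only [Nat.add_sub_cancel] at hq ⊢
  have hq' : ∀ S i, q S i =
      supersetSum μ (insert i S) / supersetSum μ S / ((k : ℝ) - m) := by
    intro S i
    rw [hq]
    simp only [supersetSum, insert_subset_iff, and_comm]
  have hkm : 0 < (k : ℝ) - m := sub_pos.2 (by exact_mod_cast hjk)
  have hk0 : (k : ℝ) ≠ 0 := by exact_mod_cast hk.ne'
  have hc : (k.choose m : ℝ) ≠ 0 := by exact_mod_cast (Nat.choose_pos (by omega : m ≤ k)).ne'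
  simp only [← supersetSum.eq_1]
  have hfirst := sum_card_sum_insert m fun R : Finset (Fin n) =>
    ((k.choose m : ℝ))⁻¹ / ((k : ℝ) - m) * supersetSum μ R *
      Real.log (((k.choose (m + 1) : ℝ))⁻¹ * supersetSum μ R /
        (((m + 1).factorial : ℝ) * ∏ i ∈ R, p i / k))
  rw [mul_sum] at hfirst
  rw [sub_eq_iff_eq_add, ← sum_add_distrib]
  refine Eq.trans (sum_congr rfl fun R _ => ?_) (hfirst.symm.trans (sum_congr rfl fun S hS => ?_))
  · rw [inv_choose_succ hjk]
    ring
  have hScard : S.card = m := (mem_filter.1 hS).2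
  have hsecond := sum_supersetSum_insert hsupp S
  rw [hScard] at hsecond
  have hmass : ((k.choose m : ℝ))⁻¹ * supersetSum μ S =
      ∑ i ∈ univ \ S, ((k.choose m : ℝ))⁻¹ / ((k : ℝ) - m) * supersetSum μ (insert i S) := by
    rw [← mul_sum, hsecond]
    field_simp
  generalize hL : Real.log (((k.choose m : ℝ))⁻¹ * supersetSum μ S /
    ((m.factorial : ℝ) * ∏ i ∈ S, p i / k)) = L
  rw [mul_sum]
  nth_rewrite 2 [hmass]
  rw [sum_mul, ← sum_add_distrib]
  refine sum_congr rfl fun i hi => ?_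
  have hiS : i ∉ S := (mem_sdiff.1 hi).2
  rw [hq']
  rcases (supersetSum_nonneg hnn (insert i S)).eq_or_lt with h0 | hpos
  · simp [← h0]
  have hSpos : 0 < supersetSum μ S := hpos.trans_le (supersetSum_anti hnn (subset_insert i S))
  have hpi := (hppos i).ne'
  have hprod : ∏ x ∈ S, p x / k ≠ 0 := prod_ne_zero_iff.2 fun x _ => div_ne_zero (hppos x).ne' hk0
  have hfac : (m.factorial : ℝ) ≠ 0 := by exact_mod_cast m.factorial_ne_zero
  have hlog : Real.log (((k.choose (m + 1) : ℝ))⁻¹ * supersetSum μ (insert i S) /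
        (((m + 1).factorial : ℝ) * ∏ x ∈ insert i S, p x / k)) =
      Real.log ((k : ℝ) * (supersetSum μ (insert i S) / supersetSum μ S / ((k : ℝ) - m)) / p i)
        + L := by
    rw [← hL, ← Real.log_mul (by positivity) (by positivity), inv_choose_succ hjk,
      prod_insert hiS, Nat.factorial_succ]
    congr 1
    push_cast
    field_simp
  rw [hlog]
  field_simp
end

section
/- Let α ∈ (0,1] and let μ be a (1/α)-entropically independent probability distribution on binom([n],k) with marginals p_i, and let ℓ be an integer with 1 ≤ ℓ ≤ k/2. Then ∑_{S∈binom([n],ℓ)} μ_ℓ(S) · log( μ_ℓ(S) / (ℓ!·∏_{i∈S}(p_i/k)) ) ≤ (ℓ²/k)·((1/α)·log(2n/k) + 1), where μ_ℓ = μD_{k→ℓ} and summands with μ_ℓ(S) = 0 are interpreted as 0. -/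
open Finset

/-- The mass that `μ` gives to the supersets of `T`. -/
noncomputable def superMass {n : ℕ} (μ : Finset (Fin n) → ℝ) (T : Finset (Fin n)) : ℝ :=
  ∑ S ∈ univ.filter (fun S : Finset (Fin n) => T ⊆ S), μ S

section SuperMass

variable {n : ℕ} {μ : Finset (Fin n) → ℝ}

theorem superMass_nonneg (hnn : ∀ S, 0 ≤ μ S) (T : Finset (Fin n)) : 0 ≤ superMass μ T :=
  sum_nonneg fun S _ => hnn S

theorem superMass_anti (hnn : ∀ S, 0 ≤ μ S) {T U : Finset (Fin n)} (h : T ⊆ U) :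
    superMass μ U ≤ superMass μ T := by
  refine sum_le_sum_of_subset_of_nonneg ?_ fun S _ _ => hnn S
  intro S hS
  simp only [mem_filter, mem_univ, true_and] at hS ⊢
  exact h.trans hS

theorem superMass_empty : superMass μ ∅ = ∑ S, μ S := by
  simp [superMass]

theorem superMass_singleton (i : Fin n) :
    superMass μ {i} = ∑ S ∈ univ.filter (fun S : Finset (Fin n) => i ∈ S), μ S := by
  simp [superMass]

theorem sum_superMass_insert {k : ℕ} (hsupp : ∀ S, μ S ≠ 0 → S.card = k)
    (T : Finset (Fin n)) :
    ∑ j, superMass μ (insert j T) = k * superMass μ T := by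
  have h : ∀ j, superMass μ (insert j T) =
      ∑ S ∈ univ.filter (fun S : Finset (Fin n) => T ⊆ S), if j ∈ S then μ S else 0 := by
    intro j
    rw [superMass, ← sum_filter, filter_filter]
    refine sum_congr ?_ fun _ _ => rfl
    ext S
    simp [insert_subset_iff, and_comm]
  simp_rw [h]
  rw [sum_comm, superMass, mul_sum]
  refine sum_congr rfl fun S _ => ?_
  rw [← sum_filter, sum_const, nsmul_eq_mul]
  by_cases hS : μ S = 0
  · simp [hS]
  · simp [hsupp S hS]

/-- Counting pairs of a set of size `i + 1` and one of its elements. -/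
theorem sum_card_sum_compl_insert (i : ℕ) (Φ : Finset (Fin n) → Fin n → ℝ) :
    ∑ T ∈ univ.filter (fun T : Finset (Fin n) => T.card = i), ∑ j ∈ Tᶜ, Φ (insert j T) j =
      ∑ U ∈ univ.filter (fun U : Finset (Fin n) => U.card = i + 1), ∑ j ∈ U, Φ U j := by
  rw [sum_sigma', sum_sigma']
  refine sum_bij' (fun x _ => ⟨insert x.2 x.1, x.2⟩) (fun x _ => ⟨x.1.erase x.2, x.2⟩)
    ?_ ?_ ?_ ?_ ?_
  · rintro ⟨T, j⟩ h
    simp only [mem_sigma, mem_filter, mem_univ, true_and, mem_compl] at h ⊢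
    exact ⟨by rw [card_insert_of_notMem h.2, h.1], mem_insert_self _ _⟩
  · rintro ⟨U, j⟩ h
    simp only [mem_sigma, mem_filter, mem_univ, true_and, mem_compl] at h ⊢
    exact ⟨by rw [card_erase_of_mem h.2, h.1]; rfl, notMem_erase _ _⟩
  · rintro ⟨T, j⟩ h
    simp only [mem_sigma, mem_filter, mem_univ, true_and, mem_compl] at h
    simp [erase_insert h.2]
  · rintro ⟨U, j⟩ h
    simp only [mem_sigma, mem_filter, mem_univ, true_and] at h
    simp [insert_erase h.2]
  · intros
    rfl

theorem sum_superMass {k : ℕ} (hsupp : ∀ S, μ S ≠ 0 → S.card = k) (hsum : ∑ S, μ S = 1)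
    (i : ℕ) :
    ∑ T ∈ univ.filter (fun T : Finset (Fin n) => T.card = i), superMass μ T = k.choose i := by
  simp only [superMass, sum_filter (fun S : Finset (Fin n) => _ ⊆ S)]
  rw [sum_comm]
  have h : ∀ S : Finset (Fin n),
      ∑ T ∈ univ.filter (fun T : Finset (Fin n) => T.card = i), (if T ⊆ S then μ S else 0) =
        k.choose i * μ S := by
    intro S
    rw [← sum_filter, sum_const, nsmul_eq_mul, filter_filter]
    by_cases hS : μ S = 0
    · simp [hS]
    · rw [← hsupp S hS, ← card_powersetCard]
      congr 3
      ext T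
      simp [mem_powersetCard, and_comm]
  simp_rw [h]
  rw [← mul_sum, hsum, mul_one]

theorem sum_card_superMass_insert {k : ℕ} (hsupp : ∀ S, μ S ≠ 0 → S.card = k)
    (i : ℕ) (j : Fin n) :
    ∑ T ∈ univ.filter (fun T : Finset (Fin n) => T.card = i), superMass μ (insert j T) =
      k.choose i * superMass μ {j} := by
  simp only [superMass, sum_filter (fun S : Finset (Fin n) => _ ⊆ S)]
  rw [sum_comm, mul_sum]
  refine sum_congr rfl fun S _ => ?_
  rw [← sum_filter, sum_const, nsmul_eq_mul, filter_filter]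
  by_cases hS : μ S = 0
  · simp [hS]
  by_cases hj : j ∈ S
  · rw [← hsupp S hS, ← card_powersetCard]
    simp only [singleton_subset_iff, hj, if_true]
    congr 3
    ext T
    simp [mem_powersetCard, insert_subset_iff, hj, and_comm]
  · simp [insert_subset_iff, hj]

theorem sum_superMass_mul_sum {k : ℕ} (hk : 0 < k) (hsupp : ∀ S, μ S ≠ 0 → S.card = k)
    (f : Fin n → ℝ) (i : ℕ) (hi : i ≤ k) :
    ∑ T ∈ univ.filter (fun T : Finset (Fin n) => T.card = i), superMass μ T * ∑ j ∈ T, f j =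
      k.choose i * (i / k) * ∑ j, superMass μ {j} * f j := by
  have hk' : (k : ℝ) ≠ 0 := by positivity
  induction i with
  | zero => simp [filter_eq']
  | succ i ih =>
    have ih := ih (by omega)
    have hsplit : ∀ T : Finset (Fin n), ∑ j ∈ Tᶜ, superMass μ (insert j T) * f j =
        ∑ j, superMass μ (insert j T) * f j - superMass μ T * ∑ j ∈ T, f j := by
      intro T
      rw [eq_sub_iff_add_eq, add_comm, ← sum_add_sum_compl T, mul_sum]
      congr 1
      exact sum_congr rfl fun j hj => by rw [insert_eq_of_mem hj]
    have hall : ∑ T ∈ univ.filter (fun T : Finset (Fin n) => T.card = i),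
        ∑ j, superMass μ (insert j T) * f j =
          k.choose i * ∑ j, superMass μ {j} * f j := by
      rw [sum_comm, mul_sum]
      refine sum_congr rfl fun j _ => ?_
      rw [← sum_mul, sum_card_superMass_insert hsupp, mul_assoc]
    have hchoose : (k.choose (i + 1) : ℝ) * (i + 1) = k.choose i * (k - i) := by
      have := Nat.choose_succ_right_eq k i
      rw [← Nat.cast_sub (by omega)]
      exact_mod_cast this
    have := sum_card_sum_compl_insert i (fun U j => superMass μ U * f j)
    simp_rw [hsplit, ← mul_sum] at this
    rw [← this, sum_sub_distrib, hall, ih]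
    push_cast
    rw [← mul_div_assoc (k.choose (i + 1) : ℝ), hchoose]
    field_simp

/-- The sum of `m log m` over the superset masses `m` of the sets of size `i`, normalized. -/
noncomputable def levelNegEntropy {n : ℕ} (μ : Finset (Fin n) → ℝ) (k i : ℕ) : ℝ :=
  (k.choose i : ℝ)⁻¹ * ∑ T ∈ univ.filter (fun T : Finset (Fin n) => T.card = i),
    superMass μ T * Real.log (superMass μ T)

theorem choose_div_choose_le {n k i : ℕ} (hk : 0 < k) (hi : 2 * i ≤ k) :
    (n.choose i : ℝ) / k.choose i ≤ (2 * n / k) ^ i := by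
  have hd : (0 : ℝ) < k.choose i := by exact_mod_cast Nat.choose_pos (by omega)
  have hf : (0 : ℝ) < i.factorial := by positivity
  have h1 : ((i.factorial * n.choose i : ℕ) : ℝ) ≤ (n : ℝ) ^ i := by
    rw [← Nat.descFactorial_eq_factorial_mul_choose]
    exact_mod_cast Nat.descFactorial_le_pow n i
  have h2 : ((k : ℝ) / 2) ^ i ≤ ((i.factorial * k.choose i : ℕ) : ℝ) := by
    rw [← Nat.descFactorial_eq_factorial_mul_choose]
    have : ((k + 1 - i : ℕ) : ℝ) ^ i ≤ (k.descFactorial i : ℝ) := by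
      exact_mod_cast Nat.pow_sub_le_descFactorial k i
    refine le_trans ?_ this
    gcongr
    rw [div_le_iff₀ two_pos]
    exact_mod_cast (by omega : k ≤ (k + 1 - i) * 2)
  have hk2 : (0 : ℝ) < ((k : ℝ) / 2) ^ i := by positivity
  push_cast at h1 h2
  calc (n.choose i : ℝ) / k.choose i
      = (i.factorial * n.choose i) / (i.factorial * k.choose i) := by
        rw [mul_div_mul_left _ _ hf.ne']
    _ ≤ (n : ℝ) ^ i / ((k : ℝ) / 2) ^ i := by gcongr
    _ = (2 * n / k) ^ i := by
        rw [← div_pow]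
        congr 1
        field_simp

theorem neg_levelNegEntropy_le {k i : ℕ} (hk : 0 < k) (hkn : k ≤ n) (hnn : ∀ S, 0 ≤ μ S)
    (hsupp : ∀ S, μ S ≠ 0 → S.card = k) (hsum : ∑ S, μ S = 1) (hi : 2 * i ≤ k) :
    -levelNegEntropy μ k i ≤ i * Real.log (2 * n / k) := by
  have hd : (0 : ℝ) < k.choose i := by exact_mod_cast Nat.choose_pos (by omega)
  have hN : (0 : ℝ) < n.choose i := by exact_mod_cast Nat.choose_pos (by omega)
  set c : ℝ := n.choose i / k.choose i with hc
  have hcpos : 0 < c := by positivity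
  have hpt : ∀ T, -(superMass μ T * Real.log (superMass μ T)) ≤
      c⁻¹ - superMass μ T + superMass μ T * Real.log c := by
    intro T
    rcases (superMass_nonneg hnn T).eq_or_lt with h | h
    · rw [← h]
      simp [hcpos.le]
    · have := Real.log_le_sub_one_of_pos (x := (superMass μ T)⁻¹ * c⁻¹) (by positivity)
      rw [Real.log_mul (by positivity) (by positivity), Real.log_inv, Real.log_inv] at this
      have h2 := mul_le_mul_of_nonneg_left this h.le
      have h3 : superMass μ T * ((superMass μ T)⁻¹ * c⁻¹ - 1) = c⁻¹ - superMass μ T := by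
        field_simp
      rw [h3] at h2
      linarith
  have hcard : ((univ.filter (fun T : Finset (Fin n) => T.card = i)).card : ℝ) = n.choose i := by
    have : univ.filter (fun T : Finset (Fin n) => T.card = i) = powersetCard i univ := by
      ext T
      simp [mem_powersetCard]
    rw [this, card_powersetCard, card_univ, Fintype.card_fin]
  have hs := sum_le_sum fun T (_ : T ∈ univ.filter (fun T : Finset (Fin n) => T.card = i)) =>
    hpt T
  rw [sum_add_distrib, sum_sub_distrib, ← sum_mul, sum_superMass hsupp hsum, sum_const,
    nsmul_eq_mul, hcard, sum_neg_distrib] at hs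
  have hlog : Real.log c ≤ i * Real.log (2 * n / k) := by
    rw [← Real.log_pow]
    exact Real.log_le_log hcpos (choose_div_choose_le hk hi)
  refine le_trans ?_ hlog
  rw [levelNegEntropy, ← mul_neg, inv_mul_le_iff₀ hd]
  have : (n.choose i : ℝ) * c⁻¹ = k.choose i := by
    rw [hc]
    field_simp
  linarith

/-- Entropic independence tested against `μ` conditioned on containing `T`. -/
theorem sum_superMass_insert_log_le {k : ℕ} (hk : 0 < k) {α : ℝ}
    (hnn : ∀ S, 0 ≤ μ S) (hsupp : ∀ S, μ S ≠ 0 → S.card = k)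
    (hEI : ∀ ν : Finset (Fin n) → ℝ, (∀ S, 0 ≤ ν S) → (∀ S, ν S ≠ 0 → S.card = k) →
      (∑ S, ν S = 1) → (∀ S, μ S = 0 → ν S = 0) →
      ∑ i : Fin n,
          ((∑ S ∈ univ.filter (fun S : Finset (Fin n) => i ∈ S), ν S) / k) *
            Real.log (((∑ S ∈ univ.filter (fun S : Finset (Fin n) => i ∈ S), ν S) / k) /
              ((∑ S ∈ univ.filter (fun S : Finset (Fin n) => i ∈ S), μ S) / k)) ≤
        1 / (α * k) * ∑ S, ν S * Real.log (ν S / μ S))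
    (T : Finset (Fin n)) :
    ∑ j, superMass μ (insert j T) * (Real.log (superMass μ (insert j T)) -
        Real.log (superMass μ T) - Real.log (superMass μ {j})) ≤
      -(1 / α * (superMass μ T * Real.log (superMass μ T))) := by
  have hk' : (0 : ℝ) < k := by positivity
  rcases (superMass_nonneg hnn T).eq_or_lt with h | h
  · have h0 : ∀ j, superMass μ (insert j T) = 0 := fun j =>
      le_antisymm (h ▸ superMass_anti hnn (subset_insert j T)) (superMass_nonneg hnn _)
    simp [h0, ← h]
  set ν : Finset (Fin n) → ℝ := fun S => if T ⊆ S then μ S / superMass μ T else 0 with hν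
  have hmass : ∀ j, ∑ S ∈ univ.filter (fun S : Finset (Fin n) => j ∈ S), ν S =
      superMass μ (insert j T) / superMass μ T := by
    intro j
    rw [hν, ← sum_filter, filter_filter, ← sum_div]
    congr 1
    refine sum_congr ?_ fun _ _ => rfl
    ext S
    simp [insert_subset_iff]
  have hν1 : ∑ S, ν S = 1 := by
    rw [hν, ← sum_filter, ← sum_div]
    exact div_self h.ne'
  have hkl : ∑ S, ν S * Real.log (ν S / μ S) = -Real.log (superMass μ T) := by
    have : ∀ S, ν S * Real.log (ν S / μ S) = ν S * -Real.log (superMass μ T) := by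
      intro S
      by_cases hS : μ S = 0
      · simp [hν, hS]
      by_cases hT : T ⊆ S
      · rw [← Real.log_inv]
        congr 2
        simp only [hν, hT, if_true]
        field_simp
      · simp [hν, hT]
    simp_rw [this]
    rw [← sum_mul, hν1, one_mul]
  have key := hEI ν
    (fun S => by simp only [hν]; split_ifs; exacts [div_nonneg (hnn S) h.le, le_rfl])
    (fun S hS => hsupp S fun h0 => hS (by simp [hν, h0])) hν1
    (fun S hS => by simp [hν, hS])
  simp_rw [hmass, ← superMass_singleton, hkl] at key
  have hterm : ∀ j, superMass μ (insert j T) / superMass μ T / k *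
      Real.log (superMass μ (insert j T) / superMass μ T / k / (superMass μ {j} / k)) =
      (superMass μ T * k)⁻¹ * (superMass μ (insert j T) *
        (Real.log (superMass μ (insert j T)) - Real.log (superMass μ T) -
          Real.log (superMass μ {j}))) := by
    intro j
    rcases (superMass_nonneg hnn (insert j T)).eq_or_lt with h0 | h0
    · simp [← h0]
    have hj : 0 < superMass μ {j} :=
      h0.trans_le (superMass_anti hnn (by simp))
    rw [div_div_div_cancel_right₀ hk'.ne', Real.log_div (by positivity) hj.ne',
      Real.log_div h0.ne' h.ne']
    field_simp
  simp_rw [hterm] at key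
  rw [← mul_sum, inv_mul_le_iff₀ (by positivity)] at key
  refine key.trans_eq ?_
  by_cases hα : α = 0
  · simp [hα]
  field_simp

theorem levelNegEntropy_succ_le {k : ℕ} (hk : 0 < k) {α : ℝ}
    (hnn : ∀ S, 0 ≤ μ S) (hsupp : ∀ S, μ S ≠ 0 → S.card = k) (hsum : ∑ S, μ S = 1)
    (hcond : ∀ T, ∑ j, superMass μ (insert j T) * (Real.log (superMass μ (insert j T)) -
        Real.log (superMass μ T) - Real.log (superMass μ {j})) ≤
      -(1 / α * (superMass μ T * Real.log (superMass μ T))))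
    {i : ℕ} (hi : i < k) :
    (k - i) * (levelNegEntropy μ k (i + 1) - levelNegEntropy μ k i -
        (∑ j, superMass μ {j} * Real.log (superMass μ {j})) / k) ≤
      1 / α * -levelNegEntropy μ k i := by
  have hd : (0 : ℝ) < k.choose i := by exact_mod_cast Nat.choose_pos hi.le
  have hd1 : (0 : ℝ) < k.choose (i + 1) := by exact_mod_cast Nat.choose_pos hi
  have hk' : (0 : ℝ) < k := by positivity
  have hchoose : (k.choose (i + 1) : ℝ) * (i + 1) = k.choose i * (k - i) := by
    have := Nat.choose_succ_right_eq k i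
    rw [← Nat.cast_sub hi.le]
    exact_mod_cast this
  have hle1 : ∀ j, superMass μ {j} ≤ 1 := fun j => by
    rw [← hsum, ← superMass_empty]
    exact superMass_anti hnn (empty_subset _)
  have hdrop : ∀ T ∈ univ.filter (fun T : Finset (Fin n) => T.card = i),
      ∑ j ∈ Tᶜ, superMass μ (insert j T) *
          (Real.log (superMass μ (insert j T)) - Real.log (superMass μ {j})) -
        (k - i) * (superMass μ T * Real.log (superMass μ T)) ≤
      -(1 / α * (superMass μ T * Real.log (superMass μ T))) := by
    intro T hT
    have hTi : (T.card : ℝ) = i := by simpa using hT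
    refine le_trans ?_ (hcond T)
    have hcompl : ∑ j ∈ Tᶜ, superMass μ (insert j T) = (k - i) * superMass μ T := by
      have h1 := sum_superMass_insert hsupp T
      rw [← sum_add_sum_compl T] at h1
      have h2 : ∑ j ∈ T, superMass μ (insert j T) = i * superMass μ T := by
        rw [sum_congr rfl fun j hj => by rw [insert_eq_of_mem hj], sum_const, nsmul_eq_mul, hTi]
      linarith
    have hmem : 0 ≤ ∑ j ∈ T, superMass μ (insert j T) * (Real.log (superMass μ (insert j T)) -
        Real.log (superMass μ T) - Real.log (superMass μ {j})) := by
      refine sum_nonneg fun j hj => ?_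
      rw [insert_eq_of_mem hj, sub_self, zero_sub]
      exact mul_nonneg (superMass_nonneg hnn T) (neg_nonneg.2
        (Real.log_nonpos (superMass_nonneg hnn _) (hle1 j)))
    rw [← sum_add_sum_compl T]
    refine le_trans (le_of_eq ?_) (le_add_of_nonneg_left hmem)
    rw [← mul_assoc, ← hcompl, sum_mul, ← sum_sub_distrib]
    exact sum_congr rfl fun j _ => by ring
  have hs := sum_le_sum hdrop
  rw [sum_sub_distrib, ← mul_sum, sum_neg_distrib, ← mul_sum,
    sum_card_sum_compl_insert i (fun U j => superMass μ U *
      (Real.log (superMass μ U) - Real.log (superMass μ {j})))] at hs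
  have hU : ∑ U ∈ univ.filter (fun U : Finset (Fin n) => U.card = i + 1),
      ∑ j ∈ U, superMass μ U * (Real.log (superMass μ U) - Real.log (superMass μ {j})) =
      (i + 1) * ∑ U ∈ univ.filter (fun U : Finset (Fin n) => U.card = i + 1),
          superMass μ U * Real.log (superMass μ U) -
        k.choose (i + 1) * ((i + 1) / k) *
          ∑ j, superMass μ {j} * Real.log (superMass μ {j}) := by
    have h1 := sum_superMass_mul_sum hk hsupp
      (fun j => Real.log (superMass μ {j})) (i + 1) hi
    push_cast at h1
    rw [← h1, mul_sum, ← sum_sub_distrib]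
    refine sum_congr rfl fun U hU => ?_
    have hUc : (U.card : ℝ) = i + 1 := by
      have : U.card = i + 1 := by simpa using hU
      exact_mod_cast this
    rw [← mul_sum, sum_sub_distrib, sum_const, nsmul_eq_mul, hUc]
    ring
  have e1 : ∑ U ∈ univ.filter (fun U : Finset (Fin n) => U.card = i + 1),
      superMass μ U * Real.log (superMass μ U) =
        k.choose (i + 1) * levelNegEntropy μ k (i + 1) := by
    rw [levelNegEntropy, mul_inv_cancel_left₀ hd1.ne']
  have e0 : ∑ U ∈ univ.filter (fun U : Finset (Fin n) => U.card = i),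
      superMass μ U * Real.log (superMass μ U) = k.choose i * levelNegEntropy μ k i := by
    rw [levelNegEntropy, mul_inv_cancel_left₀ hd.ne']
  rw [hU, e1, e0] at hs
  refine le_of_mul_le_mul_left ?_ hd
  refine le_trans (le_of_eq ?_) (hs.trans_eq (by ring))
  rw [← mul_assoc, ← hchoose]
  have : (k.choose i : ℝ) * (k - i) * levelNegEntropy μ k i =
    k.choose (i + 1) * (i + 1) * levelNegEntropy μ k i := by rw [hchoose]
  linear_combination this

end SuperMass

theorem mul_log_sub_log_descFactorial_le {k : ℕ} (hk : 0 < k) (i : ℕ) (hi : 2 * i ≤ k) :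
    i * Real.log k - Real.log (k.descFactorial i) ≤ (i : ℝ) ^ 2 / k := by
  have hk' : (0 : ℝ) < k := by positivity
  induction i with
  | zero => simp
  | succ i ih =>
    have ih := ih (by omega)
    have hik : (2 * i : ℝ) ≤ k := by exact_mod_cast (by omega : 2 * i ≤ k)
    have hpos : (0 : ℝ) < k - i := by
      have : (i : ℝ) < k := by exact_mod_cast (by omega : i < k)
      linarith
    have hd : (k.descFactorial i : ℝ) ≠ 0 := by
      exact_mod_cast (Nat.descFactorial_pos.2 (by omega)).ne'
    rw [Nat.descFactorial_succ]
    push_cast [Nat.cast_sub (by omega : i ≤ k)]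
    rw [Real.log_mul hpos.ne' hd]
    have hlog : Real.log k - Real.log (k - i) ≤ 2 * i / k := by
      rw [← Real.log_div hk'.ne' hpos.ne']
      refine (Real.log_le_sub_one_of_pos (by positivity)).trans ?_
      rw [div_sub_one hpos.ne', div_le_div_iff₀ hpos hk']
      nlinarith [(Nat.cast_nonneg i : (0 : ℝ) ≤ i)]
    have : ((i : ℝ) + 1) ^ 2 / k = (i : ℝ) ^ 2 / k + 2 * i / k + 1 / k := by
      field_simp
      ring
    have h1 : 0 < 1 / (k : ℝ) := by positivity
    linarith

theorem levelNegEntropy_sub_le {n k : ℕ} {μ : Finset (Fin n) → ℝ} (hk : 0 < k) (hkn : k ≤ n)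
    {α : ℝ} (hα : 0 < α)
    (hnn : ∀ S, 0 ≤ μ S) (hsupp : ∀ S, μ S ≠ 0 → S.card = k) (hsum : ∑ S, μ S = 1)
    (hcond : ∀ T, ∑ j, superMass μ (insert j T) * (Real.log (superMass μ (insert j T)) -
        Real.log (superMass μ T) - Real.log (superMass μ {j})) ≤
      -(1 / α * (superMass μ T * Real.log (superMass μ T))))
    (i : ℕ) (hi : 2 * i ≤ k) :
    levelNegEntropy μ k i - i / k * ∑ j, superMass μ {j} * Real.log (superMass μ {j}) ≤
      (i : ℝ) ^ 2 / k * (1 / α * Real.log (2 * n / k)) := by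
  have hk' : (0 : ℝ) < k := by positivity
  have hlog : 0 ≤ Real.log (2 * n / k) := by
    refine Real.log_nonneg ?_
    rw [le_div_iff₀ hk']
    have : (k : ℝ) ≤ n := by exact_mod_cast hkn
    linarith
  induction i with
  | zero => simp [levelNegEntropy, filter_eq', superMass_empty, hsum]
  | succ i ih =>
    have ih := ih (by omega)
    have hik : (2 * i : ℝ) ≤ k := by exact_mod_cast (by omega : 2 * i ≤ k)
    have hpos : (0 : ℝ) < k - i := by
      have : (i : ℝ) < k := by exact_mod_cast (by omega : i < k)
      linarith
    have hstep := levelNegEntropy_succ_le hk hnn hsupp hsum hcond (by omega : i < k)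
    have hent := neg_levelNegEntropy_le hk hkn hnn hsupp hsum (by omega : 2 * i ≤ k)
    set A := ∑ j, superMass μ {j} * Real.log (superMass μ {j})
    set L := Real.log (2 * n / k)
    have hinc : levelNegEntropy μ k (i + 1) - levelNegEntropy μ k i - A / k ≤
        2 * i / k * (1 / α * L) := by
      have h1 := hstep.trans (mul_le_mul_of_nonneg_left hent (by positivity : 0 ≤ 1 / α))
      rw [← le_div_iff₀' hpos] at h1
      refine h1.trans ?_
      rw [show 1 / α * (i * L) / (k - i) = i / (k - i) * (1 / α * L) by ring]
      gcongr ?_ * _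
      rw [div_le_div_iff₀ hpos hk']
      nlinarith [(Nat.cast_nonneg i : (0 : ℝ) ≤ i)]
    have hlast : 0 ≤ 1 / (k : ℝ) * (1 / α * L) := by positivity
    have e : ((i : ℝ) + 1) ^ 2 / k * (1 / α * L) = (i : ℝ) ^ 2 / k * (1 / α * L) +
        2 * i / k * (1 / α * L) + 1 / k * (1 / α * L) := by ring
    have e' : ((i : ℝ) + 1) / k * A = i / k * A + A / k := by ring
    push_cast
    rw [e, e']
    linarith

/-- KL divergence between the downed distribution `μ_ℓ = μ D_{k→ℓ}` of
an entropically independent distribution and the i.i.d. proposal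
`μ'_ℓ(S) = ℓ!·∏_{i∈S}(p_i/k)`:
`DKL(μ_ℓ‖μ'_ℓ) ≤ (ℓ²/k)·((1/α)·log(2n/k) + 1)`. -/
theorem kl_bound_down_vs_iid_proposal (n k : ℕ) (hk : 0 < k) (hkn : k ≤ n)
    (α : ℝ) (hα : α ∈ Set.Ioc (0 : ℝ) 1)
    (μ : Finset (Fin n) → ℝ)
    (hnn : ∀ S, 0 ≤ μ S) (hsupp : ∀ S, μ S ≠ 0 → S.card = k)
    (hsum : ∑ S, μ S = 1)
    -- μ is (1/α)-entropically independent
    (hEI : ∀ ν : Finset (Fin n) → ℝ, (∀ S, 0 ≤ ν S) → (∀ S, ν S ≠ 0 → S.card = k) →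
      (∑ S, ν S = 1) → (∀ S, μ S = 0 → ν S = 0) →
      ∑ i : Fin n,
          ((∑ S ∈ univ.filter (fun S : Finset (Fin n) => i ∈ S), ν S) / k) *
            Real.log (((∑ S ∈ univ.filter (fun S : Finset (Fin n) => i ∈ S), ν S) / k) /
              ((∑ S ∈ univ.filter (fun S : Finset (Fin n) => i ∈ S), μ S) / k)) ≤
        1 / (α * k) * ∑ S, ν S * Real.log (ν S / μ S))
    (p : Fin n → ℝ)
    (hp : ∀ i, p i = ∑ S ∈ univ.filter (fun S : Finset (Fin n) => i ∈ S), μ S)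
    (ℓ : ℕ) (hℓ1 : 1 ≤ ℓ) (hℓ2 : 2 * ℓ ≤ k) :
    ∑ S ∈ univ.filter (fun S : Finset (Fin n) => S.card = ℓ),
        ((k.choose ℓ : ℝ))⁻¹ * (∑ T ∈ univ.filter (fun T : Finset (Fin n) => S ⊆ T), μ T) *
          Real.log ((((k.choose ℓ : ℝ))⁻¹ *
              (∑ T ∈ univ.filter (fun T : Finset (Fin n) => S ⊆ T), μ T)) /
            ((ℓ.factorial : ℝ) * ∏ i ∈ S, p i / k)) ≤
      (ℓ : ℝ) ^ 2 / k * (1 / α * Real.log (2 * n / k) + 1) := by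
  have hk' : (0 : ℝ) < k := by positivity
  have hd : (0 : ℝ) < k.choose ℓ := by exact_mod_cast Nat.choose_pos (by omega)
  have hpm : ∀ i, p i = superMass μ {i} := fun i => by rw [hp, superMass_singleton]
  have hcond := sum_superMass_insert_log_le hk hnn hsupp hEI
  have hmain := levelNegEntropy_sub_le hk hkn hα.1 hnn hsupp hsum hcond ℓ hℓ2
  have hdesc := mul_log_sub_log_descFactorial_le hk ℓ hℓ2
  have hterm : ∀ S ∈ univ.filter (fun S : Finset (Fin n) => S.card = ℓ),
      (k.choose ℓ : ℝ)⁻¹ * superMass μ S * Real.log ((k.choose ℓ : ℝ)⁻¹ * superMass μ S /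
        (ℓ.factorial * ∏ i ∈ S, p i / k)) =
      (k.choose ℓ : ℝ)⁻¹ * (superMass μ S * Real.log (superMass μ S)) +
        (k.choose ℓ : ℝ)⁻¹ * (superMass μ S *
          (ℓ * Real.log k - Real.log (k.descFactorial ℓ))) -
        (k.choose ℓ : ℝ)⁻¹ * (superMass μ S * ∑ i ∈ S, Real.log (superMass μ {i})) := by
    intro S hS
    have hSc : S.card = ℓ := by simpa using hS
    rcases (superMass_nonneg hnn S).eq_or_lt with h | h
    · simp [← h]
    have hpos : ∀ i ∈ S, 0 < superMass μ {i} := fun i hi =>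
      h.trans_le (superMass_anti hnn (by simpa using hi))
    have hprod : Real.log (∏ i ∈ S, p i / k) =
        ∑ i ∈ S, Real.log (superMass μ {i}) - ℓ * Real.log k := by
      rw [Real.log_prod fun i hi => by rw [hpm]; exact (div_pos (hpos i hi) hk').ne',
        sum_congr rfl fun i hi => by rw [hpm, Real.log_div (hpos i hi).ne' hk'.ne'],
        sum_sub_distrib, sum_const, nsmul_eq_mul, hSc]
    have hprod0 : ∏ i ∈ S, p i / k ≠ 0 :=
      prod_ne_zero_iff.2 fun i hi => by rw [hpm]; exact (div_pos (hpos i hi) hk').ne'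
    have hf : (ℓ.factorial : ℝ) ≠ 0 := by positivity
    rw [Real.log_div (by positivity) (mul_ne_zero hf hprod0), Real.log_mul hf hprod0, hprod,
      Real.log_mul (by positivity) h.ne', Real.log_inv,
      Nat.descFactorial_eq_factorial_mul_choose]
    push_cast
    rw [Real.log_mul hf hd.ne']
    ring
  change ∑ S ∈ univ.filter (fun S : Finset (Fin n) => S.card = ℓ),
      (k.choose ℓ : ℝ)⁻¹ * superMass μ S * Real.log ((k.choose ℓ : ℝ)⁻¹ * superMass μ S /
        (ℓ.factorial * ∏ i ∈ S, p i / k)) ≤ _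
  rw [sum_congr rfl hterm, sum_sub_distrib, sum_add_distrib, ← mul_sum, ← mul_sum, ← mul_sum,
    ← sum_mul, sum_superMass hsupp hsum, sum_superMass_mul_sum hk hsupp _ ℓ (by omega),
    inv_mul_cancel_left₀ hd.ne', mul_assoc, inv_mul_cancel_left₀ hd.ne', mul_add, mul_one]
  rw [levelNegEntropy] at hmain
  linarith
end

section
/- Let U be a finite set with |U| = m, let ℓ be a positive integer, and let ρ be a probability distribution on binom(U,ℓ). For 1 ≤ t ≤ ℓ let ρ_t = ρD_{ℓ→t}, i.e. ρ_t(T) = binom(ℓ,t)^{−1}·∑_{S⊇T} ρ(S) for T ∈ binom(U,t). For ε ≥ 0 define Ω̃_ε = {S ∈ binom(U,ℓ) : ρ_{|T|}(T) ≥ ε^{|T|} for every nonempty T ⊆ S}. If 0 ≤ ε ≤ 1/(2mℓ), then ∑_{S ∉ Ω̃_ε} ρ(S) ≤ 2mℓε. -/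
open Finset
open scoped Classical

/-- If `m y ≤ 1/2`, then `(1 + y) ^ m` exceeds `1` by at most `2 m y`. -/
theorem one_add_pow_le_one_add_two_mul {y : ℝ} (hy : 0 ≤ y) (m : ℕ) (hmy : m * y ≤ 1 / 2) :
    (1 + y) ^ m ≤ 1 + 2 * (m * y) := by
  have hx : 0 ≤ m * y := by positivity
  have hexp : (1 + y) ^ m ≤ Real.exp (m * y) := by
    rw [Real.exp_nat_mul]
    gcongr
    linarith [Real.add_one_le_exp y]
  have hquad := Real.abs_exp_sub_one_sub_id_le (x := m * y) (by rw [abs_of_nonneg hx]; linarith)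
  nlinarith [le_abs_self (Real.exp (m * y) - 1 - m * y)]

/-- The weights `y ^ |T|` of the nonempty subsets of `U` add up to `(1 + y) ^ |U| - 1`. -/
theorem sum_nonempty_pow_card (U : Type*) [Fintype U] (y : ℝ) :
    ∑ T ∈ univ.filter (fun T : Finset U => T.Nonempty), y ^ T.card =
      (1 + y) ^ Fintype.card U - 1 := by
  have hall : ∑ T : Finset U, y ^ T.card = (1 + y) ^ Fintype.card U := by
    simpa [add_comm] using Fintype.sum_pow_mul_eq_add_pow U y 1
  have hempty : univ.filter (fun T : Finset U => ¬ T.Nonempty) = {∅} := by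
    ext T
    simp
  rw [← hall, ← sum_filter_add_sum_filter_not univ (fun T : Finset U => T.Nonempty), hempty]
  simp

/-- Union bound: the mass of a family of sets, each containing a member of `W`, is at most the
sum over `T ∈ W` of the mass of the sets containing `T`. -/
theorem sum_le_sum_supersets {U : Type*} [Fintype U] [DecidableEq U]
    (ρ : Finset U → ℝ) (hnn : ∀ S, 0 ≤ ρ S)
    (B W : Finset (Finset U)) (hB : ∀ S ∈ B, ∃ T ∈ W, T ⊆ S) :
    ∑ S ∈ B, ρ S ≤ ∑ T ∈ W, ∑ S ∈ univ.filter (fun S : Finset U => T ⊆ S), ρ S := by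
  simp_rw [sum_filter]
  rw [sum_comm]
  have hterm : ∀ S T : Finset U, 0 ≤ if T ⊆ S then ρ S else 0 := fun S T => by
    split_ifs
    exacts [hnn S, le_rfl]
  calc ∑ S ∈ B, ρ S ≤ ∑ S ∈ B, ∑ T ∈ W, if T ⊆ S then ρ S else 0 := by
        refine sum_le_sum fun S hS => ?_
        obtain ⟨T, hT, hTS⟩ := hB S hS
        simpa [hTS] using single_le_sum (fun T _ => hterm S T) hT
    _ ≤ _ := sum_le_sum_of_subset_of_nonneg (subset_univ B)
        fun S _ _ => sum_nonneg fun T _ => hterm S T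

/-- The set `Ω̃_ε` of `ℓ`-subsets all of whose nonempty subsets `T` are
well-represented (`ρ_{|T|}(T) ≥ ε^{|T|}`) captures all but `2mℓε` of the mass of `ρ`. -/
theorem well_represented_sets_high_probability (U : Type*) [Fintype U] [DecidableEq U]
    (m ℓ : ℕ) (hm : Fintype.card U = m) (hℓ : 0 < ℓ)
    (ρ : Finset U → ℝ)
    (hnn : ∀ S, 0 ≤ ρ S) (hsupp : ∀ S, ρ S ≠ 0 → S.card = ℓ)
    (hsum : ∑ S, ρ S = 1)
    (ε : ℝ) (hε0 : 0 ≤ ε) (hε1 : ε ≤ 1 / (2 * m * ℓ)) :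
    ∑ S ∈ univ.filter (fun S : Finset U => S.card = ℓ ∧
        ¬ (∀ T : Finset U, T ⊆ S → T.Nonempty →
          ε ^ T.card ≤ ((ℓ.choose T.card : ℝ))⁻¹ *
            ∑ S' ∈ univ.filter (fun S' : Finset U => T ⊆ S'), ρ S')),
      ρ S ≤ 2 * m * ℓ * ε := by
  set μ : Finset U → ℝ := fun T => ∑ S' ∈ univ.filter (fun S' : Finset U => T ⊆ S'), ρ S'
  set W := univ.filter (fun T : Finset U =>
    T.Nonempty ∧ T.card ≤ ℓ ∧ (ℓ.choose T.card : ℝ)⁻¹ * μ T < ε ^ T.card)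
  have hmass : ∀ T ∈ W, μ T ≤ (ℓ * ε) ^ T.card := by
    intro T hT
    obtain ⟨-, hcard, hlt⟩ := (mem_filter.mp hT).2
    have hpos : (0 : ℝ) < ℓ.choose T.card := by exact_mod_cast Nat.choose_pos hcard
    rw [inv_mul_lt_iff₀ hpos] at hlt
    calc μ T ≤ ℓ.choose T.card * ε ^ T.card := hlt.le
      _ ≤ (ℓ : ℝ) ^ T.card * ε ^ T.card := by
        gcongr
        exact_mod_cast Nat.choose_le_pow ℓ T.card
      _ = (ℓ * ε) ^ T.card := (mul_pow _ _ _).symm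
  have hsmall : (m : ℝ) * (ℓ * ε) ≤ 1 / 2 := by
    rcases Nat.eq_zero_or_pos m with rfl | hmpos
    · norm_num
    · rw [le_div_iff₀ (by positivity)] at hε1
      linarith
  have hbound := one_add_pow_le_one_add_two_mul (by positivity : 0 ≤ ℓ * ε) m hsmall
  calc _ ≤ ∑ T ∈ W, μ T := by
        refine sum_le_sum_supersets ρ hnn _ W fun S hS => ?_
        obtain ⟨hSℓ, hbad⟩ := (mem_filter.mp hS).2
        push Not at hbad
        obtain ⟨T, hTS, hTne, hlt⟩ := hbad
        exact ⟨T, mem_filter.mpr ⟨mem_univ T, hTne, hSℓ ▸ card_le_card hTS, hlt⟩, hTS⟩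
    _ ≤ ∑ T ∈ W, (ℓ * ε) ^ T.card := sum_le_sum hmass
    _ ≤ ∑ T ∈ univ.filter (fun T : Finset U => T.Nonempty), (ℓ * ε) ^ T.card :=
        sum_le_sum_of_subset_of_nonneg
          (monotone_filter_right univ fun _ _ hT => hT.1) fun _ _ _ => by positivity
    _ = (1 + ℓ * ε) ^ m - 1 := by rw [sum_nonempty_pow_card, hm]
    _ ≤ 2 * m * ℓ * ε := by linarith
end

section
/- Fix α ∈ (0,1], a positive integer n, and a probability distribution μ on the subsets of [n]. Define the α-thinning T_α(μ)(S) := ∑_{U⊇S} μ(U)·α^{|S|}·(1−α)^{|U|−|S|}, and for S₀ ⊆ [n] with T_α(μ)(S₀) > 0 define the residual distribution μ^{S₀} on subsets of [n]∖S₀ by μ^{S₀}(F) = (1−α)^{|F|}·μ(F∪S₀) / ∑_{F'⊆[n]∖S₀} (1−α)^{|F'|}·μ(F'∪S₀). Define P₀^μ := T_α(μ) and recursively P_i^μ(S) := ∑_{S₀⊆S} P₀^μ(S₀) · P_{i−1}^{μ^{S₀}}(S∖S₀) for i ≥ 1. Then for every i ≥ 0 and every S ⊆ [n], P_i^μ(S)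 = ∑_{U⊇S} μ(U)·(1−α)^{(i+1)·(|U|−|S|)}·(1−(1−α)^{i+1})^{|S|}. In particular, P_i^μ(S) ≥ μ(S)·(1−(1−α)^{i+1})^{|S|}. -/
open Finset

/-- The `α`-thinning of a measure `μ` on subsets of `[n]`:
`T_α(μ)(S) = ∑_{U⊇S} μ(U)·α^{|S|}·(1−α)^{|U|−|S|}`. -/
noncomputable def alphaThin (n : ℕ) (α : ℝ) (μ : Finset (Fin n) → ℝ) (S : Finset (Fin n)) : ℝ :=
  ∑ V ∈ Finset.univ.filter (fun V : Finset (Fin n) => S ⊆ V),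
    μ V * α ^ S.card * (1 - α) ^ (V.card - S.card)

/-- The residual distribution after sampling `S₀` in the filtering process: a distribution
on subsets of `[n] ∖ S₀` given by
`μ^{S₀}(F) = (1−α)^{|F|}·μ(F∪S₀) / ∑_{F'⊆[n]∖S₀} (1−α)^{|F'|}·μ(F'∪S₀)`. -/
noncomputable def residualDist (n : ℕ) (α : ℝ) (μ : Finset (Fin n) → ℝ) (S₀ : Finset (Fin n))
    (F : Finset (Fin n)) : ℝ :=
  if F ⊆ S₀ᶜ then
    (1 - α) ^ F.card * μ (F ∪ S₀) /
      ∑ F' ∈ S₀ᶜ.powerset, (1 - α) ^ F'.card * μ (F' ∪ S₀)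
  else 0

/-- The output distribution of `i+1` rounds of the filtering process:
`P₀^μ = T_α(μ)` and `P_i^μ(S) = ∑_{S₀⊆S} P₀^μ(S₀)·P_{i−1}^{μ^{S₀}}(S∖S₀)`. -/
noncomputable def filterProcess (n : ℕ) (α : ℝ) : ℕ → (Finset (Fin n) → ℝ) → Finset (Fin n) → ℝ
  | 0, μ => alphaThin n α μ
  | i + 1, μ => fun S =>
      ∑ S₀ ∈ S.powerset, alphaThin n α μ S₀ *
        filterProcess n α i (residualDist n α μ S₀) (S \ S₀)

/-- The supersets of `S ⊇ S₀` correspond to the supersets of `S \ S₀` inside `S₀ᶜ`. -/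
theorem sum_supersets_eq_sum_union {ι M : Type*} [Fintype ι] [DecidableEq ι] [AddCommMonoid M]
    {S₀ S : Finset ι} (h : S₀ ⊆ S) (f : Finset ι → M) :
    ∑ V with S ⊆ V, f V = ∑ W with S \ S₀ ⊆ W ∧ W ⊆ S₀ᶜ, f (W ∪ S₀) := by
  refine sum_nbij' (· \ S₀) (· ∪ S₀) ?_ ?_ ?_ ?_ ?_
  · intro V hV
    simp only [mem_filter, mem_univ, true_and] at hV ⊢
    refine ⟨sdiff_subset_sdiff hV subset_rfl, fun x hx => ?_⟩
    simp_all
  · intro W hW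
    simp only [mem_filter, mem_univ, true_and] at hW ⊢
    intro x hx
    by_cases hx₀ : x ∈ S₀
    · exact mem_union_right _ hx₀
    · exact mem_union_left _ (hW.1 (mem_sdiff.2 ⟨hx, hx₀⟩))
  · intro V hV
    simp only [mem_filter, mem_univ, true_and] at hV
    exact sdiff_union_of_subset (h.trans hV)
  · intro W hW
    simp only [mem_filter, mem_univ, true_and] at hW
    exact union_sdiff_cancel_right (subset_compl_iff_disjoint_right.1 hW.2)
  · intro V hV
    simp only [mem_filter, mem_univ, true_and] at hV
    rw [sdiff_union_of_subset (h.trans hV)]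

/-- The thinning mass of `S₀` is `α ^ |S₀|` times the normalising constant of the residual
distribution. -/
theorem alphaThin_eq_pow_mul_sum (n : ℕ) (α : ℝ) (μ : Finset (Fin n) → ℝ)
    (S₀ : Finset (Fin n)) :
    alphaThin n α μ S₀ =
      α ^ S₀.card * ∑ F ∈ S₀ᶜ.powerset, (1 - α) ^ F.card * μ (F ∪ S₀) := by
  have hset : univ.filter (fun W : Finset (Fin n) => S₀ \ S₀ ⊆ W ∧ W ⊆ S₀ᶜ) = S₀ᶜ.powerset := by
    ext W
    simp
  rw [alphaThin, sum_supersets_eq_sum_union (subset_refl S₀), hset, mul_sum]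
  refine sum_congr rfl fun F hF => ?_
  have hd : Disjoint F S₀ := subset_compl_iff_disjoint_right.1 (mem_powerset.1 hF)
  rw [card_union_of_disjoint hd, Nat.add_sub_cancel]
  ring

/-- Bayes' rule for one round: the joint mass of sampling `S₀` with remainder `W`. -/
theorem alphaThin_mul_residualDist {n : ℕ} {α : ℝ} (hα : α ≤ 1) {μ : Finset (Fin n) → ℝ}
    (hnn : ∀ S, 0 ≤ μ S) (S₀ W : Finset (Fin n)) :
    alphaThin n α μ S₀ * residualDist n α μ S₀ W =
      if W ⊆ S₀ᶜ then α ^ S₀.card * ((1 - α) ^ W.card * μ (W ∪ S₀)) else 0 := by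
  rw [alphaThin_eq_pow_mul_sum, residualDist]
  split_ifs with hW
  · have hle : (1 - α) ^ W.card * μ (W ∪ S₀) ≤
        ∑ F ∈ S₀ᶜ.powerset, (1 - α) ^ F.card * μ (F ∪ S₀) :=
      single_le_sum (f := fun F => (1 - α) ^ F.card * μ (F ∪ S₀))
        (fun F _ => mul_nonneg (pow_nonneg (sub_nonneg.2 hα) _) (hnn _)) (mem_powerset.2 hW)
    have hW₀ : 0 ≤ (1 - α) ^ W.card * μ (W ∪ S₀) :=
      mul_nonneg (pow_nonneg (sub_nonneg.2 hα) _) (hnn _)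
    rw [mul_assoc, mul_div_cancel_of_imp']
    intro hZ
    exact le_antisymm (hle.trans_eq hZ) hW₀
  · rw [mul_zero]

theorem residualDist_nonneg {n : ℕ} {α : ℝ} (hα : α ≤ 1) {μ : Finset (Fin n) → ℝ}
    (hnn : ∀ S, 0 ≤ μ S) (S₀ F : Finset (Fin n)) : 0 ≤ residualDist n α μ S₀ F := by
  have hterm (F : Finset (Fin n)) : 0 ≤ (1 - α) ^ F.card * μ (F ∪ S₀) :=
    mul_nonneg (pow_nonneg (sub_nonneg.2 hα) _) (hnn _)
  rw [residualDist]
  split_ifs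
  · exact div_nonneg (hterm F) (sum_nonneg fun F _ => hterm F)
  · exact le_rfl

/-- The output distribution after `i + 1` rounds, for any nonnegative weight `μ`. -/
theorem filterProcess_eq_sum {n : ℕ} {α : ℝ} (hα : α ≤ 1) (i : ℕ) {μ : Finset (Fin n) → ℝ}
    (hnn : ∀ S, 0 ≤ μ S) (S : Finset (Fin n)) :
    filterProcess n α i μ S =
      ∑ V with S ⊆ V, μ V * (1 - α) ^ ((i + 1) * (V.card - S.card)) *
        (1 - (1 - α) ^ (i + 1)) ^ S.card := by
  induction i generalizing μ S with
  | zero =>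
    rw [filterProcess, alphaThin]
    refine sum_congr rfl fun V _ => ?_
    simp only [zero_add, one_mul, pow_one, sub_sub_cancel]
    ring
  | succ i ih =>
    have hround : ∀ S₀ ∈ S.powerset,
        alphaThin n α μ S₀ * filterProcess n α i (residualDist n α μ S₀) (S \ S₀) =
          ∑ V with S ⊆ V, μ V * (1 - α) ^ ((i + 2) * (V.card - S.card)) *
            (α ^ S₀.card * ((1 - α) * (1 - (1 - α) ^ (i + 1))) ^ (S.card - S₀.card)) := by
      intro S₀ hS₀
      have hsub : S₀ ⊆ S := mem_powerset.1 hS₀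
      rw [ih (residualDist_nonneg hα hnn S₀), mul_sum, sum_supersets_eq_sum_union hsub,
        ← filter_filter, sum_filter (fun W : Finset (Fin n) => W ⊆ S₀ᶜ)]
      refine sum_congr rfl fun W hW => ?_
      rw [← mul_assoc, ← mul_assoc, alphaThin_mul_residualDist hα hnn]
      split_ifs with hWc
      · have hd : Disjoint W S₀ := subset_compl_iff_disjoint_right.1 hWc
        obtain ⟨k, hk⟩ := Nat.exists_eq_add_of_le (card_le_card (mem_filter.1 hW).2)
        have hS : S.card = (S \ S₀).card + S₀.card := (card_sdiff_add_card_eq_card hsub).symm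
        rw [card_union_of_disjoint hd, hS, Nat.add_sub_add_right, Nat.add_sub_cancel, hk,
          Nat.add_sub_cancel_left, mul_pow]
        ring
      · simp
    simp only [filterProcess]
    rw [sum_congr rfl hround, sum_comm]
    refine sum_congr rfl fun V _ => ?_
    rw [← mul_sum, sum_pow_mul_eq_add_pow]
    congr 2
    ring

/-- `i+1` rounds of the filtering process yield exactly the
`(1−(1−α)^{i+1})`-thinning of `μ`; in particular
`P_i^μ(S) ≥ μ(S)·(1−(1−α)^{i+1})^{|S|}`. -/
theorem filter_process_output_distribution (n : ℕ) (α : ℝ) (hα : α ∈ Set.Ioc (0 : ℝ) 1)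
    (μ : Finset (Fin n) → ℝ) (hnn : ∀ S, 0 ≤ μ S) (hsum : ∑ S, μ S = 1) :
    ∀ (i : ℕ) (S : Finset (Fin n)),
      (filterProcess n α i μ S =
        ∑ V ∈ univ.filter (fun V : Finset (Fin n) => S ⊆ V),
          μ V * (1 - α) ^ ((i + 1) * (V.card - S.card)) *
            (1 - (1 - α) ^ (i + 1)) ^ S.card) ∧
      μ S * (1 - (1 - α) ^ (i + 1)) ^ S.card ≤ filterProcess n α i μ S := by
  intro i S
  have heq := filterProcess_eq_sum hα.2 i hnn S
  refine ⟨heq, ?_⟩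
  have hβ : 0 ≤ 1 - α := sub_nonneg.2 hα.2
  have hthin : 0 ≤ 1 - (1 - α) ^ (i + 1) :=
    sub_nonneg.2 (pow_le_one₀ hβ (sub_le_self 1 hα.1.le))
  rw [heq]
  calc μ S * (1 - (1 - α) ^ (i + 1)) ^ S.card
      = μ S * (1 - α) ^ ((i + 1) * (S.card - S.card)) *
          (1 - (1 - α) ^ (i + 1)) ^ S.card := by simp
    _ ≤ _ := single_le_sum
        (f := fun V : Finset (Fin n) => μ V * (1 - α) ^ ((i + 1) * (V.card - S.card)) *
          (1 - (1 - α) ^ (i + 1)) ^ S.card)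
        (fun V _ => mul_nonneg (mul_nonneg (hnn V) (pow_nonneg hβ _)) (pow_nonneg hthin _))
        (by simp)
end

section
/- Let L be an n×n real symmetric positive semidefinite matrix, let K = L(I+L)^{−1}, and suppose that the largest eigenvalue of K satisfies λ_max(K) ≤ λ for some λ ∈ [0,1). Let α ∈ [0,1), let T ⊆ [n] be such that L_{T,T} is invertible, let T̃ = [n]∖T, and define L' = (1−α)·(L_{T̃,T̃} − L_{T̃,T}·L_{T,T}^{−1}·L_{T,T̃}) and K' = I − (I+L')^{−1} (identity matrices of size |T̃|). Then L' is symmetric positive semidefinite and λ_max(K') ≤ λ. -/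
open Finset Matrix

namespace Matrix

variable {m : Type*} [Fintype m] [DecidableEq m]

/-- Inversion of positive definite matrices reverses the Loewner order. -/
lemma PosDef.posSemidef_inv_sub_inv_iff {A B : Matrix m m ℝ} (hA : A.PosDef) (hB : B.PosDef) :
    (A⁻¹ - B⁻¹).PosSemidef ↔ (B - A).PosSemidef := by
  have := hB.isUnit.invertible
  have := hA.inv.isUnit.invertible
  have h₁ := PosDef.fromBlocks₁₁ (1 : Matrix m m ℝ) A⁻¹ hB
  have h₂ := PosDef.fromBlocks₂₂ B (1 : Matrix m m ℝ) hA.inv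
  have hAA : A⁻¹⁻¹ = A := nonsing_inv_nonsing_inv A ((isUnit_iff_isUnit_det A).1 hA.isUnit)
  simp only [conjTranspose_one, one_mul, mul_one, hAA] at h₁ h₂
  exact h₁.symm.trans h₂

/-- For `L ⪰ 0` and `c < 1`, the bound `I - (I + L)⁻¹ ⪯ c I` is equivalent to
`I + L ⪯ (1 - c)⁻¹ I`. -/
lemma PosSemidef.smul_one_sub_kernel_iff {L : Matrix m m ℝ} (hL : L.PosSemidef) {c : ℝ}
    (hc : c < 1) :
    (c • (1 : Matrix m m ℝ) - (1 - (1 + L)⁻¹)).PosSemidef ↔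
      ((1 - c)⁻¹ • (1 : Matrix m m ℝ) - (1 + L)).PosSemidef := by
  have hc' : 0 < 1 - c := sub_pos.2 hc
  have hA : (1 + L).PosDef := PosDef.one.add_posSemidef hL
  have hB : ((1 - c)⁻¹ • (1 : Matrix m m ℝ)).PosDef := PosDef.one.smul (inv_pos.2 hc')
  have hBinv : ((1 - c)⁻¹ • (1 : Matrix m m ℝ))⁻¹ = (1 - c) • 1 :=
    inv_eq_left_inv (by simp [smul_smul, hc'.ne'])
  rw [← hA.posSemidef_inv_sub_inv_iff hB, hBinv]
  congr! 1
  module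

/-- For `L ⪰ 0` the two forms of the marginal kernel agree. -/
lemma PosSemidef.mul_one_add_inv {L : Matrix m m ℝ} (hL : L.PosSemidef) :
    L * (1 + L)⁻¹ = 1 - (1 + L)⁻¹ := by
  have hA : (1 + L).PosDef := PosDef.one.add_posSemidef hL
  have h := mul_nonsing_inv (1 + L) ((isUnit_iff_isUnit_det _).1 hA.isUnit)
  rw [add_mul, one_mul] at h
  exact eq_sub_of_add_eq' h

/-- A Schur complement of a positive semidefinite matrix `L`, with respect to an invertible
principal block, is positive semidefinite and dominated by the complementary block. -/
lemma PosSemidef.schurComplement {n k : Type*} [Fintype n] {L : Matrix k k ℝ} (hL : L.PosSemidef)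
    (f : m → k) (g : n → k) (hf : IsUnit (L.submatrix f f)) :
    (L.submatrix g g - L.submatrix g f * (L.submatrix f f)⁻¹ * L.submatrix f g).PosSemidef ∧
      (L.submatrix g f * (L.submatrix f f)⁻¹ * L.submatrix f g).PosSemidef := by
  have hff : (L.submatrix f f).PosDef := (hL.submatrix f).posDef_iff_isUnit.2 hf
  have := hf.invertible
  have hgf : L.submatrix g f = (L.submatrix f g)ᴴ := by
    rw [conjTranspose_submatrix, hL.isHermitian.eq]
  rw [hgf]
  refine ⟨(PosDef.fromBlocks₁₁ _ _ hff).1 ?_,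
    hff.inv.posSemidef.conjTranspose_mul_mul_same _⟩
  rw [← hgf]
  have hblocks : fromBlocks (L.submatrix f f) (L.submatrix f g) (L.submatrix g f)
      (L.submatrix g g) = L.submatrix (Sum.elim f g) (Sum.elim f g) := by
    ext i j
    cases i <;> cases j <;> rfl
  exact hblocks ▸ hL.submatrix (Sum.elim f g)

end Matrix

/-- The spectral bound on the marginal kernel of a symmetric DPP is
preserved under the scale-and-condition update of the filtering algorithm: if
`K = L(I+L)⁻¹` satisfies `λ_max(K) ≤ λ` (i.e. `K ⪯ λI`), then with
`L' = (1−α)·(L_{T̃,T̃} − L_{T̃,T} L_{T,T}⁻¹ L_{T,T̃})` and `K' = I − (I+L')⁻¹`,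
`L'` is symmetric PSD and `λ_max(K') ≤ λ` (i.e. `K' ⪯ λI`). -/
theorem filtered_kernel_eigenvalue_bound (n : ℕ)
    (L : Matrix (Fin n) (Fin n) ℝ) (hL : L.PosSemidef)
    (lam : ℝ) (hlam : lam ∈ Set.Ico (0 : ℝ) 1)
    (hKbound : ((lam • (1 : Matrix (Fin n) (Fin n) ℝ)) - L * (1 + L)⁻¹).PosSemidef)
    (α : ℝ) (hα : α ∈ Set.Ico (0 : ℝ) 1)
    (T : Finset (Fin n))
    (hTinv : IsUnit (L.submatrix (fun i : {x // x ∈ T} => (i : Fin n))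
      (fun j : {x // x ∈ T} => (j : Fin n))))
    (L' K' : Matrix {x // x ∈ Tᶜ} {x // x ∈ Tᶜ} ℝ)
    (hL' : L' = (1 - α) •
      (L.submatrix (fun i : {x // x ∈ Tᶜ} => (i : Fin n))
          (fun j : {x // x ∈ Tᶜ} => (j : Fin n)) -
        L.submatrix (fun i : {x // x ∈ Tᶜ} => (i : Fin n))
            (fun j : {x // x ∈ T} => (j : Fin n)) *
          (L.submatrix (fun i : {x // x ∈ T} => (i : Fin n))
            (fun j : {x // x ∈ T} => (j : Fin n)))⁻¹ *
          L.submatrix (fun i : {x // x ∈ T} => (i : Fin n))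
            (fun j : {x // x ∈ Tᶜ} => (j : Fin n))))
    (hK' : K' = 1 - (1 + L')⁻¹) :
    L'.PosSemidef ∧
      ((lam • (1 : Matrix {x // x ∈ Tᶜ} {x // x ∈ Tᶜ} ℝ)) - K').PosSemidef := by
  obtain ⟨hS, hD⟩ := hL.schurComplement (fun i : {x // x ∈ T} => (i : Fin n))
    (fun i : {x // x ∈ Tᶜ} => (i : Fin n)) hTinv
  have hL'psd : L'.PosSemidef := hL' ▸ hS.smul (sub_nonneg.2 hα.2.le)
  refine ⟨hL'psd, ?_⟩
  rw [hL.mul_one_add_inv, hL.smul_one_sub_kernel_iff hlam.2] at hKbound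
  rw [hK', hL'psd.smul_one_sub_kernel_iff hlam.2]
  have hsub := hKbound.submatrix (fun i : {x // x ∈ Tᶜ} => (i : Fin n))
  simp only [submatrix_sub, submatrix_add, submatrix_smul, Pi.sub_apply, Pi.add_apply,
    Pi.smul_apply, submatrix_one _ Subtype.val_injective] at hsub
  convert (hsub.add hD).add (hS.smul hα.1) using 1
  rw [hL']
  module
end

section
/- Let K be an n×n real symmetric matrix with 0 ⪯ K ⪯ λI for some λ ∈ [0,1), and let L = K(I−K)^{−1}. Then for every T ⊆ [n], det(L_{T,T}) ≤ (1−λ)^{−|T|}·det(K_{T,T}), where L_{T,T} and K_{T,T} denote the principal submatrices indexed by T (det of the empty matrix is 1). -/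
open Finset Matrix

open scoped MatrixOrder Matrix.Norms.L2Operator in
/-- The product of two commuting positive semidefinite matrices is positive semidefinite. -/
theorem Matrix.PosSemidef.mul_of_commute {m : Type*} [Fintype m] [DecidableEq m]
    {A B : Matrix m m ℝ} (hA : A.PosSemidef) (hB : B.PosSemidef) (h : Commute A B) :
    (A * B).PosSemidef :=
  Matrix.nonneg_iff_posSemidef.mp (h.mul_nonneg hA.nonneg hB.nonneg)

/-- A real symmetric matrix `N ⪰ I` has determinant at least `1`. -/
theorem Matrix.one_le_det_of_posSemidef_sub_one {m : Type*} [Fintype m] [DecidableEq m]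
    {N : Matrix m m ℝ} (hN : (N - 1).PosSemidef) : 1 ≤ N.det := by
  have hH : N.IsHermitian := by simpa using hN.1.add (isHermitian_one (n := m) (α := ℝ))
  rw [hH.det_eq_prod_eigenvalues]
  refine Finset.one_le_prod fun i _ => ?_
  have hnonneg := hN.dotProduct_mulVec_nonneg (hH.eigenvectorBasis i)
  have hunit : star (hH.eigenvectorBasis i : m → ℝ) ⬝ᵥ (hH.eigenvectorBasis i : m → ℝ) = 1 := by
    rw [dotProduct_comm, ← EuclideanSpace.inner_eq_star_dotProduct, inner_self_eq_norm_sq_to_K,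
      hH.eigenvectorBasis.orthonormal.1 i]
    simp
  have heq := hH.eigenvalues_eq i
  rw [sub_mulVec, one_mulVec, dotProduct_sub, hunit] at hnonneg
  simp only [RCLike.re_to_real] at heq
  simp only [RCLike.ofReal_real_eq_id, id]
  linarith

open scoped MatrixOrder Matrix.Norms.L2Operator in
/-- The determinant is monotone on real positive semidefinite matrices. -/
theorem Matrix.PosSemidef.det_le_det {m : Type*} [Fintype m] [DecidableEq m]
    {A B : Matrix m m ℝ} (hA : A.PosSemidef) (hAB : (B - A).PosSemidef) : A.det ≤ B.det := by
  by_cases hdet : A.det = 0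
  · have hB : B.PosSemidef := by simpa using hAB.add hA
    exact hdet ▸ hB.det_nonneg
  obtain ⟨C, hC⟩ := CStarAlgebra.nonneg_iff_eq_star_mul_self.mp hA.nonneg
  rw [star_eq_conjTranspose] at hC
  have hCdet : IsUnit C.det := by
    refine isUnit_iff_ne_zero.mpr fun h => hdet ?_
    rw [hC, det_mul, h, mul_zero]
  have hCC : C * C⁻¹ = 1 := mul_nonsing_inv C hCdet
  have hCC' : C⁻¹ᴴ * Cᴴ = 1 := by rw [← conjTranspose_mul, hCC, conjTranspose_one]
  have hone : 1 ≤ (C⁻¹ᴴ * B * C⁻¹).det := by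
    apply one_le_det_of_posSemidef_sub_one
    convert hAB.conjTranspose_mul_mul_same C⁻¹ using 1
    have hACC : C⁻¹ᴴ * A * C⁻¹ = 1 := by
      rw [hC, ← Matrix.mul_assoc, hCC', Matrix.one_mul, hCC]
    rw [Matrix.mul_sub, Matrix.sub_mul, hACC]
  have hB : B.det = (C⁻¹ᴴ * B * C⁻¹).det * A.det := by
    have h1 : C.det * C⁻¹.det = 1 := by rw [← det_mul, hCC, det_one]
    have h2 : C⁻¹ᴴ.det * Cᴴ.det = 1 := by rw [← det_mul, hCC', det_one]
    rw [hC]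
    simp only [det_mul]
    linear_combination (-B.det) * h1 - B.det * C.det * C⁻¹.det * h2
  rw [hB]
  exact le_mul_of_one_le_left hA.det_nonneg hone

/-- For a symmetric kernel `0 ⪯ K ⪯ λI` with `λ < 1` and ensemble matrix
`L = K(I−K)⁻¹`, every principal minor of `L` satisfies
`det(L_{T,T}) ≤ (1−λ)^{−|T|}·det(K_{T,T})`. -/
theorem ensemble_minor_bound (n : ℕ)
    (K : Matrix (Fin n) (Fin n) ℝ)
    (lam : ℝ) (hlam : lam ∈ Set.Ico (0 : ℝ) 1)
    (hK0 : K.PosSemidef)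
    (hKlam : ((lam • (1 : Matrix (Fin n) (Fin n) ℝ)) - K).PosSemidef)
    (L : Matrix (Fin n) (Fin n) ℝ) (hL : L = K * (1 - K)⁻¹) :
    ∀ T : Finset (Fin n),
      (L.submatrix (fun i : {x // x ∈ T} => (i : Fin n))
        (fun j : {x // x ∈ T} => (j : Fin n))).det ≤
      (1 - lam)⁻¹ ^ T.card *
        (K.submatrix (fun i : {x // x ∈ T} => (i : Fin n))
          (fun j : {x // x ∈ T} => (j : Fin n))).det := by
  intro T
  have hpos : 0 < 1 - lam := sub_pos.mpr hlam.2
  have hdef : (1 - K).PosDef := by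
    have h : (1 - K) = (1 - lam) • (1 : Matrix (Fin n) (Fin n) ℝ) + (lam • 1 - K) := by
      rw [sub_smul, one_smul]; abel
    rw [h]
    exact (PosDef.one.smul hpos).add_posSemidef hKlam
  have hunit : IsUnit (1 - K).det := hdef.det_pos.ne'.isUnit
  have hcomm : Commute K (1 - K)⁻¹ := by
    have h : Commute (1 - K) (1 - K)⁻¹ :=
      (mul_nonsing_inv _ hunit).trans (nonsing_inv_mul _ hunit).symm
    simpa only [sub_sub_cancel] using (Commute.one_left (1 - K)⁻¹).sub_left h
  have hL0 : L.PosSemidef := hL ▸ hK0.mul_of_commute hdef.posSemidef.inv hcomm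
  have hKL : ((1 - lam)⁻¹ • K - L).PosSemidef := by
    have hprod : (lam • 1 - K) * (K * (1 - K)⁻¹) = K - (1 - lam) • L := by
      have h : K * (1 - K)⁻¹ - K * (K * (1 - K)⁻¹) = K := by
        rw [← one_sub_mul, hcomm.eq, mul_nonsing_inv_cancel_left _ _ hunit]
      rw [hL, Matrix.sub_mul, Matrix.smul_mul, Matrix.one_mul, sub_smul, one_smul]
      linear_combination (norm := module) h
    have hscale : (1 - lam)⁻¹ • K - L = (1 - lam)⁻¹ • ((lam • 1 - K) * L) := by
      rw [hL, hprod, ← hL, smul_sub, smul_smul, inv_mul_cancel₀ hpos.ne', one_smul]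
    rw [hscale]
    refine (hKlam.mul_of_commute hL0 ?_).smul (inv_nonneg.mpr hpos.le)
    rw [hL]
    exact (((Commute.one_left _).smul_left lam).sub_left ((Commute.refl K).mul_right hcomm))
  rw [← Fintype.card_coe T, ← det_smul]
  exact (hL0.submatrix _).det_le_det (hKL.submatrix _)
end
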